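/- arXiv:2405.00778 — 6 statements merged into one kernel-verified Lean document; each statement's English description precedes it below -/
import Mathlib

section
/- Let n ≥ 1 and 0 ≤ d ≤ n, and let E = {2-element subsets of [n]} ⊔ [n] be the common ground set. For every subset S ⊆ E, the columns of the matrix J_Sym indexed by S are linearly independent (i.e., S is independent in the symmetric matrix completion matroid 𝒮_n(d)) if and only if the span over K' of the vectors {p_e : e ∈ E ∖ S} has dimension binom(n−d+1, 2) (i.e., E ∖ S is spanning in the symmetric power matroid S_n(n−d, 0)). In matroid language: the symmetric power matroid S_n(n−d, 0) is the dual of the symmetric matrix completion matroid 𝒮_n(d). -/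
open scoped Classical

noncomputable section

/-- The rational function field `ℚ(x_{ij} : i ∈ [n], j ∈ [d])`. -/
abbrev SymK (n d : ℕ) := FractionRing (MvPolynomial (Fin n × Fin d) ℚ)

noncomputable def Xv (n d : ℕ) (i : Fin n) (j : Fin d) : SymK n d :=
  algebraMap (MvPolynomial (Fin n × Fin d) ℚ) (SymK n d) (MvPolynomial.X (i, j))

/-- The column of `J_Sym` labeled by `e`: the ground set of `𝒮_n(d)`, the 2-element
subsets of `[n]` together with the elements of `[n]`, is encoded as `Sym2 (Fin n)`,
with the off-diagonal element `s(i,k)` encoding the subset `{i,k}` and the diagonal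
element `s(i,i)` encoding `i ∈ [n]`.  The row labeled `(i,j)` has entry `2·x_{ij}` in
the column labeled `i`, entry `x_{kj}` in the column labeled `{i,k}`, and `0`
elsewhere. -/
noncomputable def colJSym (n d : ℕ) (e : Sym2 (Fin n)) : Fin n × Fin d → SymK n d :=
  fun row =>
    Sym2.lift
      ⟨fun a b => (if a = row.1 then Xv n d b row.2 else 0) +
                  (if b = row.1 then Xv n d a row.2 else 0),
       fun a b => add_comm _ _⟩ e

/-- The field `K'`: fractions of the polynomial ring over `ℚ` in the variables
`v_{ik}` (`i ∈ [n]`, `k ∈ [n-d]`). -/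
abbrev SymK' (n c : ℕ) := FractionRing (MvPolynomial (Fin n × Fin c) ℚ)

noncomputable def vv (n c : ℕ) (i : Fin n) (k : Fin c) : SymK' n c :=
  algebraMap (MvPolynomial (Fin n × Fin c) ℚ) (SymK' n c) (MvPolynomial.X (i, k))

/-- The vector `p_e ∈ K'^{[n-d]×[n-d]}` realizing the symmetric product of the totally
generic vectors: for `e = {i,j}` with `i ≠ j` its `(k,l)`-entry is
`v_{ik}v_{jl} + v_{jk}v_{il}` (realizing `v_i ⊗ v_j + v_j ⊗ v_i`), and for the
diagonal element `e = i ∈ [n]` its `(k,l)`-entry is `v_{ik}v_{il}`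
(realizing `v_i ⊗ v_i`). -/
noncomputable def pVec (n c : ℕ) (e : Sym2 (Fin n)) : Fin c × Fin c → SymK' n c :=
  fun kl =>
    Sym2.lift
      ⟨fun a b =>
        if a = b then vv n c a kl.1 * vv n c a kl.2
        else vv n c a kl.1 * vv n c b kl.2 + vv n c b kl.1 * vv n c a kl.2,
       fun a b => by
        rcases eq_or_ne a b with h | h
        · subst h; rfl
        · simp only [if_neg h, if_neg h.symm]; ring⟩ e

lemma spec_linInd {ι m R K F : Type*} [Fintype ι] [Fintype m] [CommRing R] [IsDomain R]
    [Field K] [Algebra R K] [IsFractionRing R K] [Field F] (φ : R →+* F) (v : ι → m → R)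
    (h : LinearIndependent F (fun i j => φ (v i j))) :
    LinearIndependent K (fun i j => algebraMap R K (v i j)) := by
  let A : Matrix ι m F := Matrix.of fun i j => φ (v i j)
  have hr : A.rank = Fintype.card ι := LinearIndependent.rank_matrix (M := A) h
  rw [Matrix.rank_eq_finrank_span_cols] at hr
  obtain ⟨f, hf, -, hli⟩ := Submodule.exists_fun_fin_finrank_span_eq F (Set.range A.col)
  choose g hg using hf
  let eqv : ι ≃ Fin (Module.finrank F (Submodule.span F (Set.range A.col))) :=
    Fintype.equivOfCardEq (by simp [hr])
  let B : Matrix ι ι R := Matrix.of fun i j => v j (g (eqv i))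
  have hB : (B.map φ).det ≠ 0 := by
    have h1 : LinearIndependent F (B.map φ).row := by
      have := hli.comp eqv eqv.injective
      have he : (B.map φ).row = f ∘ eqv := by
        funext i
        exact hg (eqv i)
      rw [he]
      exact this
    have := Matrix.linearIndependent_rows_iff_isUnit.1 h1
    exact ((Matrix.isUnit_iff_isUnit_det _).1 this).ne_zero
  have hB2 : B.det ≠ 0 := by
    intro h0
    apply hB
    have := φ.map_det B
    rw [h0] at this
    simpa using this.symm
  have hB3 : ((B.map (algebraMap R K)).transpose).det ≠ 0 := by
    rw [Matrix.det_transpose]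
    have := (algebraMap R K).map_det B
    rw [RingHom.mapMatrix_apply] at this
    rw [← this]
    simpa using hB2
  have h4 := Matrix.linearIndependent_rows_of_det_ne_zero hB3
  exact LinearIndependent.of_comp (LinearMap.funLeft K K (fun i => g (eqv i))) h4

def gcol {R : Type*} [CommRing R] {n d : ℕ} (X : Matrix (Fin n) (Fin d) R) (e : Sym2 (Fin n)) :
    Fin n × Fin d → R :=
  fun row =>
    Sym2.lift
      ⟨fun a b => (if a = row.1 then X b row.2 else 0) +
                  (if b = row.1 then X a row.2 else 0),
       fun a b => add_comm _ _⟩ e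

def gp {R : Type*} [CommRing R] {n c : ℕ} (V : Matrix (Fin n) (Fin c) R) (e : Sym2 (Fin n)) :
    Fin c × Fin c → R :=
  fun kl =>
    Sym2.lift
      ⟨fun a b =>
        if a = b then V a kl.1 * V a kl.2
        else V a kl.1 * V b kl.2 + V b kl.1 * V a kl.2,
       fun a b => by
        rcases eq_or_ne a b with h | h
        · subst h; rfl
        · simp only [if_neg h, if_neg h.symm]; ring⟩ e

lemma gcol_map {R T : Type*} [CommRing R] [CommRing T] (φ : R →+* T) {n d : ℕ}
    (X : Matrix (Fin n) (Fin d) R) (e) (r) : φ (gcol X e r) = gcol (X.map φ) e r := by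
  induction e with | _ a b
  simp [gcol, apply_ite φ]

lemma gp_map {R T : Type*} [CommRing R] [CommRing T] (φ : R →+* T) {n d : ℕ}
    (X : Matrix (Fin n) (Fin d) R) (e) (r) : φ (gp X e r) = gp (X.map φ) e r := by
  induction e with | _ a b
  simp [gp, apply_ite φ]

def symL (F : Type*) [Field F] (c : ℕ) : (Sym2 (Fin c) → F) →ₗ[F] (Fin c × Fin c → F) :=
  LinearMap.funLeft F F (fun kl => s(kl.1, kl.2))

lemma symL_inj (F : Type*) [Field F] (c : ℕ) : Function.Injective (symL F c) := by
  apply LinearMap.funLeft_injective_of_surjective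
  intro e
  induction e with | _ a b
  exact ⟨(a, b), rfl⟩

lemma symL_finrank (F : Type*) [Field F] (c : ℕ) :
    Module.finrank F (LinearMap.range (symL F c)) = Nat.choose (c + 1) 2 := by
  rw [LinearMap.finrank_range_of_inj (symL_inj F c)]
  simp [Sym2.card]

lemma mem_symL {F : Type*} [Field F] {c : ℕ} (q : Fin c × Fin c → F) :
    q ∈ LinearMap.range (symL F c) ↔ ∀ k l, q (k, l) = q (l, k) := by
  constructor
  · rintro ⟨f, rfl⟩ k l
    simp [symL, LinearMap.funLeft, Sym2.eq_swap]
  · intro h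
    refine ⟨fun e => Sym2.lift ⟨fun k l => q (k, l), h⟩ e, ?_⟩
    ext ⟨k, l⟩
    simp [symL, LinearMap.funLeft]

lemma gp_symm {R : Type*} [CommRing R] {n c : ℕ} (V : Matrix (Fin n) (Fin c) R) (e) (k l) :
    gp V e (k, l) = gp V e (l, k) := by
  induction e with | _ a b
  simp only [gp, Sym2.lift_mk]
  split_ifs <;> ring

lemma span_gp_le {F : Type*} [Field F] {n c : ℕ} (V : Matrix (Fin n) (Fin c) F) (T) :
    Submodule.span F (gp V '' T) ≤ LinearMap.range (symL F c) := by
  rw [Submodule.span_le]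
  rintro _ ⟨e, -, rfl⟩
  exact (mem_symL _).2 (gp_symm V e)

def pr {F : Type*} [Field F] {c : ℕ} (A : Matrix (Fin c) (Fin c) F) (q : Fin c × Fin c → F) : F :=
  ∑ k, ∑ l, A k l * q (k, l)

/-- spanning criterion -/
lemma span_iff {F : Type*} [Field F] [CharZero F] {n c : ℕ} (V : Matrix (Fin n) (Fin c) F) (T) :
    Module.finrank F (Submodule.span F (gp V '' T)) = Nat.choose (c + 1) 2 ↔
      ∀ A : Matrix (Fin c) (Fin c) F, A.transpose = A → (∀ e ∈ T, pr A (gp V e) = 0) → A = 0 := by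
  have hprs : ∀ (A : Matrix (Fin c) (Fin c) F) q, (∀ k l, q (k, l) = q (l, k)) →
      pr A.transpose q = pr A q := by
    intro A q hq
    unfold pr
    rw [Finset.sum_comm]
    simp only [Matrix.transpose_apply]
    refine Finset.sum_congr rfl fun k _ => Finset.sum_congr rfl fun l _ => ?_
    rw [hq]
  constructor
  · intro h A hA hT
    have hs := Submodule.eq_of_le_of_finrank_eq (span_gp_le V T) (by rw [h, symL_finrank])
    have h0 : ∀ q ∈ Submodule.span F (gp V '' T), pr A q = 0 := by
      intro q hq
      induction hq using Submodule.span_induction with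
      | mem x hx => obtain ⟨e, he, rfl⟩ := hx; exact hT e he
      | zero => simp [pr]
      | add x y _ _ hx hy =>
        simp only [pr, Pi.add_apply, mul_add, Finset.sum_add_distrib] at *
        rw [hx, hy, add_zero]
      | smul a x _ hx =>
        simp only [pr, Pi.smul_apply, smul_eq_mul, mul_left_comm _ a, ← Finset.mul_sum] at *
        rw [hx, mul_zero]
    ext a b
    have := h0 (fun kl => (if kl.1 = a then if kl.2 = b then 1 else 0 else 0) +
        (if kl.1 = b then if kl.2 = a then 1 else 0 else 0)) (by
      rw [hs, mem_symL]
      intro k l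
      simp only
      rw [add_comm]
      congr 1 <;> (split_ifs <;> simp_all))
    simp only [pr, mul_add, Finset.sum_add_distrib, mul_ite, mul_one, mul_zero,
      Finset.sum_ite_irrel, Finset.sum_const_zero, Finset.sum_ite_eq', Finset.sum_ite_eq,
      Finset.mem_univ, if_true] at this
    have h2 : A b a = A a b := congrFun (congrFun hA a) b
    rw [h2, ← two_mul] at this
    simpa using this
  · intro h
    rw [← symL_finrank F c]
    by_contra hne
    have hlt := lt_of_le_of_ne (span_gp_le V T) (fun h' => hne (by rw [h']))
    obtain ⟨q, hq, hq'⟩ := SetLike.exists_of_lt hlt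
    obtain ⟨f, hf, hker⟩ := Submodule.exists_le_ker_of_notMem hq'
    let A' : Matrix (Fin c) (Fin c) F := Matrix.of fun k l => f (fun j => if (k, l) = j then 1 else 0)
    have hfA : ∀ x, f x = pr A' x := by
      intro x
      rw [LinearMap.pi_apply_eq_sum_univ f x, Fintype.sum_prod_type]
      refine Finset.sum_congr rfl fun k _ => Finset.sum_congr rfl fun l _ => ?_
      rw [smul_eq_mul, mul_comm]
      simp only [A', Matrix.of_apply]
    have hadd : ∀ x, pr (A' + A'.transpose) x = pr A' x + pr A'.transpose x := by
      intro x
      simp [pr, add_mul, Finset.sum_add_distrib]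
    have hA := h (A' + A'.transpose) (by simp [add_comm]) (by
      intro e he
      rw [hadd, hprs _ _ (gp_symm V e), ← hfA]
      have : f (gp V e) = 0 := hker (Submodule.subset_span ⟨e, he, rfl⟩)
      simp [this])
    have h1 := hadd q
    rw [hA, hprs _ _ ((mem_symL q).1 hq), ← hfA, ← two_mul] at h1
    apply hf
    simpa [pr] using h1

lemma pr_gp {F : Type*} [Field F] {n c : ℕ} (V : Matrix (Fin n) (Fin c) F)
    (A : Matrix (Fin c) (Fin c) F) (hA : A.transpose = A) (i j) :
    pr A (gp V s(i, j)) = (V * A * V.transpose) i j * (if i = j then 1 else 2) := by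
  have h1 : ∀ i j, (V * A * V.transpose) i j = ∑ k, ∑ l, A k l * (V i k * V j l) := by
    intro i j
    simp only [Matrix.mul_apply, Matrix.transpose_apply, Finset.sum_mul]
    rw [Finset.sum_comm]
    refine Finset.sum_congr rfl fun k _ => Finset.sum_congr rfl fun l _ => ?_
    ring
  split_ifs with h
  · subst h
    simp [h1, pr, gp]
  · have h2 : (V * A * V.transpose) j i = (V * A * V.transpose) i j := by
      have : (V * A * V.transpose).transpose = V * A * V.transpose := by
        simp [Matrix.transpose_mul, hA, Matrix.mul_assoc]
      exact congrFun (congrFun this i) j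
    rw [mul_two]
    nth_rw 2 [← h2]
    rw [h1, h1, ← Finset.sum_add_distrib]
    simp only [pr, gp, Sym2.lift_mk, if_neg h, ← Finset.sum_add_distrib]
    refine Finset.sum_congr rfl fun k _ => Finset.sum_congr rfl fun l _ => ?_
    ring

def wMat {F : Type*} [Field F] {n : ℕ} (w : Sym2 (Fin n) → F) : Matrix (Fin n) (Fin n) F :=
  Matrix.of fun i k => w s(i, k) * (if i = k then 2 else 1)

lemma wMat_symm {F : Type*} [Field F] {n : ℕ} (w : Sym2 (Fin n) → F) :
    (wMat w).transpose = wMat w := by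
  ext i k
  simp [wMat, Sym2.eq_swap, eq_comm]

lemma wMat_zero {F : Type*} [Field F] [CharZero F] {n : ℕ} (w : Sym2 (Fin n) → F)
    (h : wMat w = 0) : w = 0 := by
  funext e
  induction e with | _ a b
  have := congrFun (congrFun h a) b
  simp only [wMat, Matrix.of_apply, Matrix.zero_apply, mul_eq_zero] at this
  rcases this with h | h
  · exact h
  · split_ifs at h <;> simp at h

lemma sum_gcol {F : Type*} [Field F] {n d : ℕ} (X : Matrix (Fin n) (Fin d) F)
    (w : Sym2 (Fin n) → F) (i j) :
    (∑ e, w e • gcol X e) (i, j) = (wMat w * X) i j := by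
  have h1 : ∀ e, gcol X e (i, j) =
      ∑ k, if s(i, k) = e then (if i = k then 2 else 1) * X k j else 0 := by
    intro e
    induction e with | _ a b
    have h3 : ∀ k, (if s(i, k) = s(a, b) then (if i = k then 2 else 1) * X k j else 0) =
        (if k = b then if a = i then X b j else 0 else 0) +
        (if k = a then if b = i then X a j else 0 else 0) := by
      intro k
      by_cases h1 : k = b <;> by_cases h2 : k = a <;> by_cases h4 : a = i <;>
        by_cases h5 : b = i <;> simp [h1, h2, h4, h5, eq_comm] <;> grind
    simp only [h3, Finset.sum_add_distrib]
    simp [gcol]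
  simp only [Finset.sum_apply, Pi.smul_apply, h1, smul_eq_mul, Finset.mul_sum]
  rw [Finset.sum_comm, Matrix.mul_apply]
  refine Finset.sum_congr rfl fun k _ => ?_
  simp [wMat, mul_assoc]

lemma linInd_iff {F : Type*} [Field F] {n d : ℕ} (X : Matrix (Fin n) (Fin d) F)
    (S : Set (Sym2 (Fin n))) :
    LinearIndependent F (fun e : S => gcol X e) ↔
      ∀ w : Sym2 (Fin n) → F, (∀ e ∈ Sᶜ, w e = 0) → wMat w * X = 0 → w = 0 := by
  have hs : ∀ w : Sym2 (Fin n) → F, (∀ e ∈ Sᶜ, w e = 0) →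
      ∑ e, w e • gcol X e = ∑ e : S, w e • gcol X e := by
    intro w hw
    rw [← Finset.sum_subtype (Finset.univ.filter (· ∈ S)) (by simp) (fun e => w e • gcol X e)]
    symm
    apply Finset.sum_subset (Finset.subset_univ _)
    intro e _ he
    rw [hw e (by simpa using he), zero_smul]
  have hz : ∀ w : Sym2 (Fin n) → F, wMat w * X = 0 ↔ ∑ e, w e • gcol X e = 0 := by
    intro w
    constructor
    · intro h
      ext ⟨i, j⟩
      rw [sum_gcol, h]; rfl
    · intro h
      ext i j
      rw [← sum_gcol, h]; rfl
  rw [Fintype.linearIndependent_iff]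
  constructor
  · intro h w hw h0
    rw [hz, hs w hw] at h0
    funext e
    by_cases he : e ∈ S
    · exact h (fun e => w e) h0 ⟨e, he⟩
    · exact hw e he
  · intro h g hg
    let w : Sym2 (Fin n) → F := fun e => if he : e ∈ S then g ⟨e, he⟩ else 0
    have hw : ∀ e ∈ Sᶜ, w e = 0 := fun e he => dif_neg he
    have hwg : ∀ e : S, w e = g e := fun e => dif_pos e.2
    have := h w hw (by rw [hz, hs w hw]; simpa only [hwg] using hg)
    intro e
    rw [← hwg, this]; rfl

lemma key {F : Type*} [Field F] [CharZero F] {n d c : ℕ} (hn : d + c = n)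
    (X : Matrix (Fin n) (Fin d) F) (V : Matrix (Fin n) (Fin c) F)
    (hX : LinearIndependent F X.col) (hV : LinearIndependent F V.col)
    (hXV : X.transpose * V = 0) (S : Set (Sym2 (Fin n))) :
    LinearIndependent F (fun e : S => gcol X e) ↔
    Module.finrank F (Submodule.span F (gp V '' Sᶜ)) = Nat.choose (c + 1) 2 := by
  have hVi : Function.Injective V.mulVec := Matrix.mulVec_injective_iff.2 hV
  obtain ⟨U, hU⟩ : ∃ U : Matrix (Fin c) (Fin n) F, U * V = 1 := by
    obtain ⟨g, hg⟩ := V.mulVecLin.exists_leftInverse_of_injective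
      (LinearMap.ker_eq_bot.2 hVi)
    refine ⟨LinearMap.toMatrix' g, ?_⟩
    have := congrArg LinearMap.toMatrix' hg
    rw [LinearMap.toMatrix'_comp] at this
    simpa [← Matrix.toLin'_apply'] using this
  have hker : LinearMap.range V.mulVecLin = LinearMap.ker X.transpose.mulVecLin := by
    apply Submodule.eq_of_le_of_finrank_eq
    · rintro _ ⟨u, rfl⟩
      rw [LinearMap.mem_ker, Matrix.mulVecLin_apply, Matrix.mulVecLin_apply,
        Matrix.mulVec_mulVec, hXV, Matrix.zero_mulVec]
    · have h1 := LinearMap.finrank_range_add_finrank_ker X.transpose.mulVecLin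
      have h2 : X.transpose.rank = d := by
        have := LinearIndependent.rank_matrix (M := X.transpose) hX
        simpa using this
      rw [LinearMap.finrank_range_of_inj hVi]
      rw [Matrix.rank] at h2
      simp at h1 ⊢
      omega
  have hproj : ∀ W : Matrix (Fin n) (Fin n) F, X.transpose * W = 0 → V * (U * W) = W := by
    intro W hW
    apply Matrix.ext_col
    intro j
    have : W.col j ∈ LinearMap.range V.mulVecLin := by
      rw [hker]
      ext i
      exact congrFun (congrFun hW i) j
    obtain ⟨u, hu⟩ := this
    have h3 : (V * (U * W)).col j = V.mulVec (U.mulVec (W.col j)) := by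
      rw [Matrix.mulVec_mulVec, ← Matrix.mul_assoc]; rfl
    rw [h3, ← hu]
    simp only [Matrix.mulVecLin_apply, Matrix.mulVec_mulVec]
    rw [hU, Matrix.mul_one]
  have hVX : V.transpose * X = 0 := by
    have := congrArg Matrix.transpose hXV
    simpa [Matrix.transpose_mul] using this
  have hUt : V.transpose * U.transpose = 1 := by
    rw [← Matrix.transpose_mul, hU, Matrix.transpose_one]
  rw [linInd_iff, span_iff]
  constructor
  · intro h A hA hT
    let w : Sym2 (Fin n) → F := fun e => pr A (gp V e)
    have hW : wMat w = (2 : F) • (V * A * V.transpose) := by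
      ext i j
      simp only [wMat, Matrix.of_apply, w, pr_gp V A hA, Matrix.smul_apply, smul_eq_mul]
      split_ifs <;> ring
    have hw := h w hT (by rw [hW, Matrix.smul_mul, Matrix.mul_assoc, hVX]; simp)
    have h0 : V * A * V.transpose = 0 := by
      have : wMat w = 0 := by rw [hw]; ext; simp [wMat]
      rw [this] at hW
      simpa using hW.symm
    calc A = (U * V) * A * (V.transpose * U.transpose) := by rw [hU, hUt]; simp
      _ = U * (V * A * V.transpose) * U.transpose := by simp only [Matrix.mul_assoc]
      _ = 0 := by rw [h0]; simp
  · intro h w hw h0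
    have hs := wMat_symm w
    have h1 : X.transpose * wMat w = 0 := by
      have := congrArg Matrix.transpose h0
      simpa [Matrix.transpose_mul, hs] using this
    have h2 := hproj _ h1
    have h3 : wMat w * U.transpose * V.transpose = wMat w := by
      have := congrArg Matrix.transpose h2
      simpa [Matrix.transpose_mul, hs] using this
    let A := U * wMat w * U.transpose
    have hA : A.transpose = A := by simp [A, Matrix.transpose_mul, hs, Matrix.mul_assoc]
    have hVA : V * A * V.transpose = wMat w := by
      calc V * A * V.transpose = (V * (U * wMat w)) * U.transpose * V.transpose := by
            simp only [A, Matrix.mul_assoc]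
        _ = _ := by rw [h2, h3]
    have hA0 := h A hA (by
      intro e he
      have hwe := hw e he
      induction e with | _ a b
      rw [pr_gp V A hA, hVA]
      simp [wMat, hwe])
    apply wMat_zero
    rw [← hVA, hA0]; simp

lemma exists_compl {F : Type*} [Field F] {n d c : ℕ} (hn : d + c = n)
    (X : Matrix (Fin n) (Fin d) F) (hX : LinearIndependent F X.col) :
    ∃ V : Matrix (Fin n) (Fin c) F, LinearIndependent F V.col ∧ X.transpose * V = 0 := by
  have h1 := LinearMap.finrank_range_add_finrank_ker X.transpose.mulVecLin
  have h2 : X.transpose.rank = d := by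
    have := LinearIndependent.rank_matrix (M := X.transpose) hX
    simpa using this
  rw [Matrix.rank] at h2
  have h3 : Module.finrank F (LinearMap.ker X.transpose.mulVecLin) = c := by
    simp at h1
    omega
  let b := Module.finBasisOfFinrankEq F _ h3
  refine ⟨Matrix.of fun i k => (b k : Fin n → F) i, ?_, ?_⟩
  · exact b.linearIndependent.map' (Submodule.subtype _) (Submodule.ker_subtype _)
  · ext i k
    exact congrFun (b k).2 i

def genM (n d : ℕ) : Matrix (Fin n) (Fin d) (MvPolynomial (Fin n × Fin d) ℚ) :=
  Matrix.of fun i j => MvPolynomial.X (i, j)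

lemma genM_aeval {n d : ℕ} {F : Type*} [Field F] [Algebra ℚ F] (X : Matrix (Fin n) (Fin d) F) :
    (genM n d).map (MvPolynomial.aeval (R := ℚ) (fun p : Fin n × Fin d => X p.1 p.2) :
      MvPolynomial (Fin n × Fin d) ℚ →ₐ[ℚ] F).toRingHom = X := by
  ext i j
  simp [genM]

abbrev genK (n d : ℕ) : Matrix (Fin n) (Fin d) (SymK n d) :=
  (genM n d).map (algebraMap _ (SymK n d))

lemma genK_col (n d : ℕ) (hd : d ≤ n) : LinearIndependent (SymK n d) (genK n d).col := by
  let Y : Matrix (Fin n) (Fin d) ℚ := Matrix.of fun i j => if i = Fin.castLE hd j then 1 else 0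
  refine spec_linInd (MvPolynomial.aeval (R := ℚ) (fun p : Fin n × Fin d => Y p.1 p.2) :
      MvPolynomial (Fin n × Fin d) ℚ →ₐ[ℚ] ℚ).toRingHom (fun j i => genM n d i j) ?_
  have h : LinearIndependent ℚ Y.col := by
    have := (Pi.basisFun ℚ (Fin n)).linearIndependent.comp (Fin.castLE hd)
      (Fin.castLE_injective hd)
    convert this using 1
    ext j i
    simp [Y, Matrix.col, Pi.single_apply]
  have he : (fun j i => (MvPolynomial.aeval (R := ℚ) (fun p : Fin n × Fin d => Y p.1 p.2) :
      MvPolynomial (Fin n × Fin d) ℚ →ₐ[ℚ] ℚ).toRingHom (genM n d i j)) = Y.col := by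
    funext j i
    exact congrFun (congrFun (genM_aeval Y) i) j
  rw [he]
  exact h

lemma spec_gcol {n d : ℕ} {F : Type*} [Field F] [Algebra ℚ F] (X : Matrix (Fin n) (Fin d) F)
    {ι : Type*} [Fintype ι] (f : ι → Sym2 (Fin n))
    (h : LinearIndependent F (fun e => gcol X (f e))) :
    LinearIndependent (SymK n d) (fun e => gcol (genK n d) (f e)) := by
  have := spec_linInd (K := SymK n d)
    (MvPolynomial.aeval (R := ℚ) (fun p : Fin n × Fin d => X p.1 p.2) :
      MvPolynomial (Fin n × Fin d) ℚ →ₐ[ℚ] F).toRingHom (fun e => gcol (genM n d) (f e)) (by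
      simpa only [gcol_map, genM_aeval] using h)
  simpa only [gcol_map] using this

lemma spec_gp {n d : ℕ} {F : Type*} [Field F] [Algebra ℚ F] (X : Matrix (Fin n) (Fin d) F)
    {ι : Type*} [Fintype ι] (f : ι → Sym2 (Fin n))
    (h : LinearIndependent F (fun e => gp X (f e))) :
    LinearIndependent (SymK n d) (fun e => gp (genK n d) (f e)) := by
  have := spec_linInd (K := SymK n d)
    (MvPolynomial.aeval (R := ℚ) (fun p : Fin n × Fin d => X p.1 p.2) :
      MvPolynomial (Fin n × Fin d) ℚ →ₐ[ℚ] F).toRingHom (fun e => gp (genM n d) (f e)) (by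
      simpa only [gp_map, genM_aeval] using h)
  simpa only [gp_map] using this

lemma main_aux (n d c : ℕ) (hn : d + c = n) (S : Set (Sym2 (Fin n))) :
    LinearIndependent (SymK n d) (fun e : S => gcol (genK n d) e) ↔
      Module.finrank (SymK n c) (Submodule.span (SymK n c) (gp (genK n c) '' Sᶜ)) =
        Nat.choose (c + 1) 2 := by
  constructor
  · intro h
    obtain ⟨V, hV, hXV⟩ := exists_compl hn (genK n d) (genK_col n d (by omega))
    have hk := (key hn _ V (genK_col n d (by omega)) hV hXV S).1 h
    apply le_antisymm
    · rw [← symL_finrank (SymK n c) c]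
      exact Submodule.finrank_mono (span_gp_le _ _)
    · rw [← hk]
      obtain ⟨f, hf, -, hli⟩ :=
        Submodule.exists_fun_fin_finrank_span_eq (SymK n d) (gp V '' Sᶜ)
      choose g hg hgf using hf
      have h1 := spec_gp V g (by simpa only [hgf] using hli)
      have h2 := finrank_span_eq_card h1
      rw [Fintype.card_fin] at h2
      rw [← h2]
      apply Submodule.finrank_mono
      apply Submodule.span_mono
      rintro _ ⟨i, rfl⟩
      exact ⟨g i, hg i, rfl⟩
  · intro h
    obtain ⟨X, hX, hVX⟩ := exists_compl (c := d) (by omega : c + d = n) (genK n c)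
      (genK_col n c (by omega))
    have hXV : X.transpose * genK n c = 0 := by
      have := congrArg Matrix.transpose hVX
      simpa [Matrix.transpose_mul] using this
    have hk := (key hn X _ hX (genK_col n c (by omega)) hXV S).2 h
    exact spec_gcol X (fun e : S => (e : Sym2 (Fin n))) hk

/-- The symmetric power matroid `S_n(n−d, 0)` is the dual of the symmetric matrix
completion matroid `𝒮_n(d)`:  a set `S` of columns of `J_Sym` is linearly independent
iff the span of the vectors `p_e` for `e ∉ S` has dimension `(n−d+1).choose 2`. -/
theorem symPower_dual_symCompletion (n d : ℕ) (hn : 1 ≤ n) (hd : d ≤ n)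
    (S : Set (Sym2 (Fin n))) :
    LinearIndependent (SymK n d) (fun e : S => colJSym n d e) ↔
      Module.finrank (SymK' n (n - d))
          (Submodule.span (SymK' n (n - d)) (pVec n (n - d) '' Sᶜ)) =
        Nat.choose (n - d + 1) 2 := by
  exact main_aux n d (n - d) (by omega) S
end
end

section
/- Let n ≥ 1 and 0 ≤ d ≤ n, and let E = {2-element subsets of [n]} be the common ground set. For every subset S ⊆ E, the columns of the matrix H indexed by S are linearly independent (i.e., S is independent in the hyperconnectivity matroid H_n(d)) if and only if the span over K' of the vectors {q_{{i,j}} : {i,j} ∈ E ∖ S} has dimension binom(n−d, 2) (i.e., E ∖ S is spanning in the wedge power matroid W_n(n−d, 0)). In matroid language: the wedge power matroid W_n(n−d, 0) is the dual of the hyperconnectivity matroid H_n(d). -/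
open scoped Classical

noncomputable section

/-- The ground set: 2-element subsets of `[n]`, encoded as ordered pairs `(i,j)` with
`i < j`. -/
abbrev Pairs (n : ℕ) := {p : Fin n × Fin n // p.1 < p.2}

/-- The rational function field `ℚ(x_{ij} : i ∈ [n], j ∈ [d])`. -/
abbrev HK (n d : ℕ) := FractionRing (MvPolynomial (Fin n × Fin d) ℚ)

noncomputable def Xh (n d : ℕ) (i : Fin n) (j : Fin d) : HK n d :=
  algebraMap (MvPolynomial (Fin n × Fin d) ℚ) (HK n d) (MvPolynomial.X (i, j))

/-- The column of the hyperconnectivity matrix `H` labeled by the pair `{k,ℓ}` with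
`k < ℓ`: the row labeled `(i,j)` has entry `x_{kj}` when `ℓ = i`, entry `−x_{ℓj}` when
`k = i`, and `0` otherwise. -/
noncomputable def colH (n d : ℕ) (e : Pairs n) : Fin n × Fin d → HK n d := fun row =>
  if e.1.2 = row.1 then Xh n d e.1.1 row.2
  else if e.1.1 = row.1 then - Xh n d e.1.2 row.2
  else 0

/-- The field `K'`: fractions of the polynomial ring over `ℚ` in the variables
`v_{ik}` (`i ∈ [n]`, `k ∈ [n-d]`). -/
abbrev HK' (n c : ℕ) := FractionRing (MvPolynomial (Fin n × Fin c) ℚ)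

noncomputable def vh (n c : ℕ) (i : Fin n) (k : Fin c) : HK' n c :=
  algebraMap (MvPolynomial (Fin n × Fin c) ℚ) (HK' n c) (MvPolynomial.X (i, k))

/-- The vector `q_{{i,j}} ∈ K'^{[n-d]×[n-d]}` (for `i < j`) with `(k,l)`-entry
`v_{ik}v_{jl} − v_{jk}v_{il}`, realizing `v_i ∧ v_j`. -/
noncomputable def qVec (n c : ℕ) (e : Pairs n) : Fin c × Fin c → HK' n c := fun kl =>
  vh n c e.1.1 kl.1 * vh n c e.1.2 kl.2 - vh n c e.1.2 kl.1 * vh n c e.1.1 kl.2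


open Matrix in
theorem aux_spec {I J R L F : Type} [Fintype I] [Fintype J] [CommRing R]
    [Field L] [Field F] (φ : R →+* L) (ψ : R →+* F) (hψ : Function.Injective ψ)
    (A : I → J → R) (h : LinearIndependent L (fun i j => φ (A i j))) :
    LinearIndependent F (fun i j => ψ (A i j)) := by
  let M : Matrix I J L := fun i j => φ (A i j)
  have hr : M.rank = Fintype.card I := LinearIndependent.rank_matrix (M := M) h
  have hs : Submodule.span L (Set.range M.col) = ⊤ := by
    apply Submodule.eq_top_of_finrank_eq
    rw [← Matrix.rank_eq_finrank_span_cols, hr, Module.finrank_fintype_fun_eq_card]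
  obtain ⟨κ, a, ha, hspan, hli⟩ := exists_linearIndependent' L M.col
  rw [hs] at hspan
  have : Fintype κ := Fintype.ofInjective a ha
  let b : Module.Basis κ L (I → L) := Module.Basis.mk hli (by rw [hspan])
  have hc : Fintype.card κ = Fintype.card I := by
    rw [← Module.finrank_eq_card_basis b, Module.finrank_fintype_fun_eq_card]
  let e : I ≃ κ := (Fintype.equivOfCardEq hc).symm
  let B : Matrix I I R := fun i i' => A i (a (e i'))
  have h1 : IsUnit (B.map φ) := by
    rw [← linearIndependent_cols_iff_isUnit]
    exact hli.comp e e.injective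
  have h2 : B.det ≠ 0 := by
    intro h0
    have := (Matrix.isUnit_iff_isUnit_det _).1 h1
    rw [← RingHom.mapMatrix_apply, ← RingHom.map_det, h0, map_zero] at this
    exact not_isUnit_zero this
  have h3 : LinearIndependent F (B.map ψ).row := by
    rw [linearIndependent_rows_iff_isUnit, Matrix.isUnit_iff_isUnit_det,
      ← RingHom.mapMatrix_apply, ← RingHom.map_det, isUnit_iff_ne_zero]
    exact (map_ne_zero_iff ψ hψ).2 h2
  exact LinearIndependent.of_comp (LinearMap.funLeft F F (fun i' => a (e i'))) h3

open Matrix in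
theorem aux_exact {K : Type} [Field K] {n d c : ℕ} (hdc : d + c = n)
    (X : Matrix (Fin n) (Fin d) K) (V : Matrix (Fin n) (Fin c) K)
    (hX : LinearIndependent K X.col) (hV : LinearIndependent K V.col)
    (h0 : Xᵀ * V = 0) :
    ∃ W : Matrix (Fin c) (Fin n) K, W * V = 1 ∧
      ∀ Y : Matrix (Fin n) (Fin n) K, Xᵀ * Y = 0 → V * (W * Y) = Y := by
  have hVi := Matrix.mulVec_injective_iff.2 hV
  obtain ⟨g, hg⟩ := LinearMap.exists_leftInverse_of_injective V.mulVecLin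
    (LinearMap.ker_eq_bot.2 hVi)
  have hWV : LinearMap.toMatrix' g * V = 1 := by
    have := congrArg LinearMap.toMatrix' hg
    rw [LinearMap.toMatrix'_comp, LinearMap.toMatrix'_id] at this
    rwa [← Matrix.toLin'_apply', LinearMap.toMatrix'_toLin'] at this
  refine ⟨LinearMap.toMatrix' g, hWV, ?_⟩
  have hker : LinearMap.range V.mulVecLin = LinearMap.ker Xᵀ.mulVecLin := by
    apply Submodule.eq_of_le_of_finrank_eq
    · rintro _ ⟨w, rfl⟩
      rw [LinearMap.mem_ker, Matrix.mulVecLin_apply, Matrix.mulVecLin_apply, Matrix.mulVec_mulVec, h0, Matrix.zero_mulVec]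
    · have h1 := LinearMap.finrank_range_add_finrank_ker Xᵀ.mulVecLin
      have h2 : Module.finrank K (LinearMap.range Xᵀ.mulVecLin) = d := by
        have := LinearIndependent.rank_matrix (M := Xᵀ) hX
        simpa [Matrix.rank] using this
      have h3 : Module.finrank K (LinearMap.range V.mulVecLin) = c := by
        simpa using LinearMap.finrank_range_of_inj (f := V.mulVecLin) hVi
      rw [h2] at h1
      simp at h1
      omega
  intro Y hY
  ext i j
  have hm : Y.col j ∈ LinearMap.ker Xᵀ.mulVecLin := by
    ext i'
    exact congrFun (congrFun hY i') j
  rw [← hker] at hm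
  obtain ⟨w, hw⟩ := hm
  have hw' : V *ᵥ w = Y.col j := hw
  have : (V * (LinearMap.toMatrix' g * Y)).col j = Y.col j := by
    have e1 : (V * (LinearMap.toMatrix' g * Y)).col j
        = V *ᵥ (LinearMap.toMatrix' g *ᵥ Y.col j) := rfl
    rw [e1, ← hw', Matrix.mulVec_mulVec w, hWV, Matrix.one_mulVec]
  exact congrFun this i

open Matrix in
theorem aux_compl {K : Type} [Field K] {n d c : ℕ} (hdc : d + c = n)
    (X : Matrix (Fin n) (Fin d) K) (hX : LinearIndependent K X.col) :
    ∃ V : Matrix (Fin n) (Fin c) K, LinearIndependent K V.col ∧ Xᵀ * V = 0 := by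
  have h1 := LinearMap.finrank_range_add_finrank_ker Xᵀ.mulVecLin
  have h2 : Module.finrank K (LinearMap.range Xᵀ.mulVecLin) = d := by
    have := LinearIndependent.rank_matrix (M := Xᵀ) hX
    simpa [Matrix.rank] using this
  have h3 : Module.finrank K (LinearMap.ker Xᵀ.mulVecLin) = c := by
    rw [h2] at h1
    simp at h1
    omega
  let b := Module.finBasisOfFinrankEq K _ h3
  refine ⟨fun i k => (b k : Fin n → K) i, ?_, ?_⟩
  · exact b.linearIndependent.map' (Submodule.subtype _) (Submodule.ker_subtype _)
  · ext j k
    have := (b k).2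
    rw [LinearMap.mem_ker] at this
    exact congrFun this j

/-- generic matrices have independent columns -/
theorem aux_generic {n d : ℕ} (hd : d ≤ n) :
    LinearIndependent (HK n d) (fun (j : Fin d) (i : Fin n) => Xh n d i j) := by
  refine aux_spec (R := MvPolynomial (Fin n × Fin d) ℚ)
    (MvPolynomial.eval (fun p : Fin n × Fin d => if p.1 = Fin.castLE hd p.2 then (1:ℚ) else 0))
    (algebraMap _ (HK n d)) (IsFractionRing.injective _ _)
    (fun (j : Fin d) (i : Fin n) => MvPolynomial.X (i, j)) ?_
  simp only [MvPolynomial.eval_X]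
  rw [Fintype.linearIndependent_iff]
  intro g hg j
  have := congrFun hg (Fin.castLE hd j)
  simpa [Finset.sum_apply, Fin.castLE_inj] using this

def upM {K : Type} [Field K] {n : ℕ} (l : Pairs n → K) : Matrix (Fin n) (Fin n) K :=
  fun i j => if h : i < j then l ⟨(i, j), h⟩ else 0

def skM {K : Type} [Field K] {n : ℕ} (l : Pairs n → K) : Matrix (Fin n) (Fin n) K :=
  fun i j => upM l i j - upM l j i

theorem skM_pair {K : Type} [Field K] {n : ℕ} (l : Pairs n → K) (e : Pairs n) :
    skM l e.1.1 e.1.2 = l e := by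
  have h := e.2
  simp [skM, upM, h, not_lt.2 h.le]

open Matrix in
theorem skM_transpose {K : Type} [Field K] {n : ℕ} (l : Pairs n → K) :
    (skM l)ᵀ = - skM l := by
  ext i j
  simp [skM]

open Matrix in
theorem skM_eq {K : Type} [Field K] [CharZero K] {n : ℕ} (M : Matrix (Fin n) (Fin n) K)
    (hM : Mᵀ = -M) : skM (fun e : Pairs n => M e.1.1 e.1.2) = M := by
  have h : ∀ i j, M j i = - M i j := fun i j => congrFun (congrFun hM i) j
  ext i j
  rcases lt_trichotomy i j with hij | rfl | hij
  · simp [skM, upM, hij, not_lt.2 hij.le]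
  · have := h i i
    have h2 : M i i = 0 := self_eq_neg.1 this
    simp [skM, upM, h2]
  · simp [skM, upM, hij, not_lt.2 hij.le]
    rw [h i j, neg_neg]

theorem sum_upM {K : Type} [Field K] {n : ℕ} (l : Pairs n → K) (F : Fin n → Fin n → K) :
    ∑ i, ∑ j, upM l i j * F i j = ∑ e : Pairs n, l e * F e.1.1 e.1.2 := by
  rw [← Fintype.sum_prod_type' (f := fun i j => upM l i j * F i j)]
  have : ∀ e : Pairs n, l e * F e.1.1 e.1.2 =
      (fun p : Fin n × Fin n => upM l p.1 p.2 * F p.1 p.2) e.1 := by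
    intro e
    have h := e.2
    simp [upM, h]
  rw [Finset.sum_congr rfl (fun e _ => this e)]
  rw [← Finset.sum_subset (Finset.subset_univ (Finset.univ.filter
      (fun p : Fin n × Fin n => p.1 < p.2)))
      (fun p _ hp => by
        have hp' : ¬ p.1 < p.2 := by simpa using hp
        simp [upM, hp'])]
  exact Finset.sum_subtype (p := fun p : Fin n × Fin n => p.1 < p.2) _ (by simp) _

theorem sum_skM {K : Type} [Field K] {n : ℕ} (l : Pairs n → K) (F : Fin n → Fin n → K) :
    ∑ i, ∑ j, skM l i j * F i j =
      ∑ e : Pairs n, l e * (F e.1.1 e.1.2 - F e.1.2 e.1.1) := by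
  simp only [skM, sub_mul, Finset.sum_sub_distrib, mul_sub]
  rw [sum_upM l F]
  congr 1
  rw [Finset.sum_comm]
  exact sum_upM l (fun i j => F j i)

def colG {K : Type} [Field K] {n d : ℕ} (X : Fin n → Fin d → K) (e : Pairs n) :
    Fin n × Fin d → K := fun row =>
  if e.1.2 = row.1 then X e.1.1 row.2
  else if e.1.1 = row.1 then - X e.1.2 row.2
  else 0

def qG {K : Type} [Field K] {n c : ℕ} (v : Fin n → Fin c → K) (e : Pairs n) :
    Fin c × Fin c → K := fun kl =>
  v e.1.1 kl.1 * v e.1.2 kl.2 - v e.1.2 kl.1 * v e.1.1 kl.2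

open Matrix in
theorem sum_colG {K : Type} [Field K] {n d : ℕ} (X : Matrix (Fin n) (Fin d) K)
    (l : Pairs n → K) (i : Fin n) (j : Fin d) :
    ∑ e, l e * colG X e (i, j) = ((skM l)ᵀ * X) i j := by
  have := sum_skM l (fun k i' => if i' = i then X k j else 0)
  rw [Matrix.mul_apply]
  simp only [mul_ite, mul_zero, Finset.sum_ite_eq', Finset.mem_univ, if_true] at this
  simp only [Matrix.transpose_apply]
  rw [this]
  refine Finset.sum_congr rfl fun e _ => ?_
  have h := e.2
  congr 1
  unfold colG
  by_cases h1 : e.1.2 = i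
  · have h2 : e.1.1 ≠ i := fun h2 => by rw [h1, h2] at h; exact lt_irrefl _ h
    simp [h1, h2]
  · by_cases h2 : e.1.1 = i <;> simp [h1, h2]

open Matrix in
theorem sum_qG {K : Type} [Field K] {n c : ℕ} (V : Matrix (Fin n) (Fin c) K)
    (m : Pairs c → K) (e : Pairs n) :
    ∑ kl : Pairs c, m kl * qG V e kl.1 = (V * skM m * Vᵀ) e.1.1 e.1.2 := by
  have := sum_skM m (fun k l => V e.1.1 k * V e.1.2 l)
  rw [Matrix.mul_apply]
  simp only [Matrix.mul_apply, Matrix.transpose_apply, Finset.sum_mul]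
  rw [Finset.sum_comm]
  have h2 : ∀ k l, V e.1.1 k * skM m k l * V e.1.2 l
    = skM m k l * (V e.1.1 k * V e.1.2 l) := fun k l => by ring
  simp only [h2]
  rw [this]
  refine Finset.sum_congr rfl fun kl _ => ?_
  unfold qG
  ring

open Matrix in
theorem aux_core {K : Type} [Field K] [CharZero K] {n d c : ℕ} (hdc : d + c = n)
    (X : Matrix (Fin n) (Fin d) K) (V : Matrix (Fin n) (Fin c) K)
    (hX : LinearIndependent K X.col) (hV : LinearIndependent K V.col)
    (h0 : Xᵀ * V = 0) (S : Set (Pairs n)) :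
    LinearIndependent K (fun e : S => colG X e) ↔
    LinearIndependent K (fun (kl : Pairs c) (e : ↥Sᶜ) => qG V e.1 kl.1) := by
  obtain ⟨W, hWV, hW⟩ := aux_exact hdc X V hX hV h0
  have hVW : Vᵀ * Wᵀ = 1 := by rw [← Matrix.transpose_mul, hWV, Matrix.transpose_one]
  have h0' : Vᵀ * X = 0 := by
    have := congrArg Matrix.transpose h0
    simpa [Matrix.transpose_mul] using this
  rw [Fintype.linearIndependent_iff, Fintype.linearIndependent_iff]
  constructor
  · intro hP m hm
    have hsupp : ∀ e : Pairs n, e ∉ S → (V * skM m * Vᵀ) e.1.1 e.1.2 = 0 := by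
      intro e he
      rw [← sum_qG]
      have := congrFun hm ⟨e, he⟩
      simpa [Finset.sum_apply] using this
    set Λ := V * skM m * Vᵀ with hΛ
    have hsk : Λᵀ = -Λ := by
      rw [hΛ]
      simp [Matrix.transpose_mul, skM_transpose, Matrix.mul_assoc]
    have hl := skM_eq Λ hsk
    have hX0 : Λᵀ * X = 0 := by
      rw [hsk, hΛ, Matrix.neg_mul, Matrix.mul_assoc, h0', Matrix.mul_zero, neg_zero]
    have hz := hP (fun e => Λ e.1.1.1 e.1.1.2) (by
      ext ⟨i, j⟩
      have h1 := sum_colG X (fun e : Pairs n => Λ e.1.1 e.1.2) i j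
      rw [hl, hX0] at h1
      rw [← Finset.sum_subset (Finset.subset_univ (Finset.univ.filter (· ∈ S)))
        (fun e _ he => by rw [hsupp e (by simpa using he), zero_mul]),
        Finset.sum_subtype (p := (· ∈ S)) _ (by simp)] at h1
      simpa [Finset.sum_apply] using h1)
    have hΛ0 : Λ = 0 := by
      rw [← hl]
      have : (fun e : Pairs n => Λ e.1.1 e.1.2) = 0 := by
        ext e
        by_cases he : e ∈ S
        · exact hz ⟨e, he⟩
        · exact hsupp e he
      rw [this]
      ext i j
      simp [skM, upM]
    have hM0 : skM m = 0 := by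
      calc skM m = (W * V) * skM m * (Vᵀ * Wᵀ) := by rw [hWV, hVW]; simp
        _ = W * (V * skM m * Vᵀ) * Wᵀ := by simp only [Matrix.mul_assoc]
        _ = 0 := by rw [← hΛ, hΛ0]; simp
    intro kl
    rw [← skM_pair m kl, hM0]
    rfl
  · intro hQ l hl
    let l' : Pairs n → K := fun e => if h : e ∈ S then l ⟨e, h⟩ else 0
    have hX0 : (skM l')ᵀ * X = 0 := by
      ext i j
      rw [← sum_colG]
      rw [← Finset.sum_subset (Finset.subset_univ (Finset.univ.filter (· ∈ S)))
        (fun e _ he => by simp only [l']; rw [dif_neg (by simpa using he), zero_mul]),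
        Finset.sum_subtype (p := (· ∈ S)) _ (by simp)]
      have := congrFun hl (i, j)
      simpa [Finset.sum_apply, l'] using this
    have hX1 : Xᵀ * skM l' = 0 := by
      have := congrArg Matrix.transpose hX0
      simpa [Matrix.transpose_mul] using this
    have e1 : V * (W * skM l') = skM l' := hW _ hX1
    have e2 : skM l' * (Wᵀ * Vᵀ) = skM l' := by
      have := congrArg Matrix.transpose e1
      simpa [Matrix.transpose_mul, skM_transpose, Matrix.mul_assoc] using this
    set M := W * skM l' * Wᵀ with hM
    have hMs : Mᵀ = -M := by
      rw [hM]
      simp [Matrix.transpose_mul, skM_transpose, Matrix.mul_assoc]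
    have hMe := skM_eq M hMs
    have hVM : V * M * Vᵀ = skM l' := by
      calc V * M * Vᵀ = (V * (W * skM l')) * (Wᵀ * Vᵀ) := by rw [hM]; simp only [Matrix.mul_assoc]
        _ = skM l' := by rw [e1, e2]
    have hz := hQ (fun e => M e.1.1 e.1.2) (by
      ext ⟨e, he⟩
      have h1 := sum_qG V (fun e : Pairs c => M e.1.1 e.1.2) e
      rw [hMe, hVM, skM_pair] at h1
      have h2 : l' e = 0 := dif_neg he
      rw [h2] at h1
      simpa [Finset.sum_apply] using h1)
    have hM0 : M = 0 := by
      rw [← hMe]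
      have : (fun e : Pairs c => M e.1.1 e.1.2) = 0 := by
        ext e
        exact hz e
      rw [this]
      ext i j
      simp [skM, upM]
    rintro ⟨e, he⟩
    have h3 : l' e = 0 := by
      rw [← skM_pair l' e, ← hVM, hM0]
      simp
    simpa [l', he] using h3

theorem card_Pairs (c : ℕ) : Fintype.card (Pairs c) = c.choose 2 := by
  rw [Fintype.card_subtype, Finset.card_filter, Fintype.sum_prod_type_right]
  rw [Finset.sum_congr rfl (g := fun j : Fin c => (j : ℕ)) (fun j _ => by
    rw [← Finset.card_filter, ← Fin.card_Iio j]
    congr 1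
    ext x
    simp)]
  rw [Fin.sum_univ_eq_sum_range (fun i => i) c, Finset.sum_range_id, Nat.choose_two_right]

theorem aux_finrank {K : Type} [Field K] {n c : ℕ} (V : Fin n → Fin c → K)
    (T : Set (Pairs n)) :
    Module.finrank K (Submodule.span K (qG V '' T)) = c.choose 2 ↔
    LinearIndependent K (fun (kl : Pairs c) (e : T) => qG V e.1 kl.1) := by
  let ι : (Pairs c → K) →ₗ[K] (Fin c × Fin c → K) :=
    { toFun := fun m kl => skM m kl.1 kl.2
      map_add' := by
        intro x y
        ext kl
        simp only [skM, upM, Pi.add_apply]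
        split_ifs <;> ring
      map_smul' := by
        intro r x
        ext kl
        simp only [skM, upM, Pi.smul_apply, smul_eq_mul, RingHom.id_apply]
        split_ifs <;> ring }
  have hι : Function.Injective ι := by
    intro x y h
    ext e
    rw [← skM_pair x e, ← skM_pair y e]
    exact congrFun h e.1
  let N : Matrix (Pairs c) T K := fun kl e => qG V e.1 kl.1
  have hq : qG V '' T = ι '' (Set.range N.col) := by
    rw [← Set.range_comp]
    have : qG V '' T = Set.range (fun e : T => qG V e.1) := by
      rw [Set.image_eq_range]
    rw [this]
    congr 1
    funext e
    ext ⟨k, l⟩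
    change _ = skM (fun kl : Pairs c => qG V e.1 kl.1) k l
    rcases lt_trichotomy k l with hij | rfl | hij
    · simp [skM, upM, hij, not_lt.2 hij.le]
    · simp [skM, upM, qG]; ring
    · simp [skM, upM, hij, not_lt.2 hij.le, qG]; ring
  rw [hq, ← Submodule.map_span,
    ← (Submodule.equivMapOfInjective ι hι _).finrank_eq, ← Matrix.rank_eq_finrank_span_cols,
    Matrix.rank_eq_finrank_span_row, ← card_Pairs, eq_comm]
  exact (linearIndependent_iff_card_eq_finrank_span (b := N.row)).symm

/-- The wedge power matroid `W_n(n−d, 0)` is the dual of the hyperconnectivity matroid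
`H_n(d)`: a set `S` of columns of `H` is linearly independent iff the span of the
vectors `q_e` for `e ∉ S` has dimension `(n−d).choose 2`. -/
theorem wedgePower_dual_hyperconnectivity (n d : ℕ) (hn : 1 ≤ n) (hd : d ≤ n)
    (S : Set (Pairs n)) :
    LinearIndependent (HK n d) (fun e : S => colH n d e) ↔
      Module.finrank (HK' n (n - d))
          (Submodule.span (HK' n (n - d)) (qVec n (n - d) '' Sᶜ)) =
        Nat.choose (n - d) 2 := by

  have hdc : d + (n - d) = n := by omega
  have hcd : (n - d) + d = n := by omega
  have hfin := aux_finrank (vh n (n - d)) Sᶜ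
  refine Iff.trans ?_ hfin.symm
  have hgX := aux_generic hd
  have hgV := aux_generic (Nat.sub_le n d)
  constructor
  · intro h
    obtain ⟨V, hV, h0⟩ := aux_compl hdc (fun i j => Xh n d i j) hgX
    have h1 := (aux_core hdc _ V hgX hV h0 S).1 h
    have h2 := aux_spec (R := MvPolynomial (Fin n × Fin (n - d)) ℚ)
      (MvPolynomial.eval₂Hom (algebraMap ℚ (HK n d)) (fun p : Fin n × Fin (n - d) => V p.1 p.2))
      (algebraMap _ (HK' n (n - d))) (IsFractionRing.injective _ _)
      (fun (kl : Pairs (n - d)) (e : ↥Sᶜ) =>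
        MvPolynomial.X (e.1.1.1, kl.1.1) * MvPolynomial.X (e.1.1.2, kl.1.2)
        - MvPolynomial.X (e.1.1.2, kl.1.1) * MvPolynomial.X (e.1.1.1, kl.1.2))
      (by
        simp only [map_sub, map_mul, MvPolynomial.coe_eval₂Hom, MvPolynomial.eval₂_X]
        exact h1)
    simp only [map_sub, map_mul] at h2
    exact h2
  · intro h
    obtain ⟨X, hX, h0⟩ := aux_compl hcd (Matrix.of fun i j => vh n (n - d) i j) hgV
    have h0' := congrArg Matrix.transpose h0
    rw [Matrix.transpose_mul, Matrix.transpose_transpose, Matrix.transpose_zero] at h0'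
    have h1 := (aux_core hdc X _ hX hgV h0' S).2 h
    have h2 := aux_spec (R := MvPolynomial (Fin n × Fin d) ℚ)
      (MvPolynomial.eval₂Hom (algebraMap ℚ (HK' n (n - d))) (fun p : Fin n × Fin d => X p.1 p.2))
      (algebraMap _ (HK n d)) (IsFractionRing.injective _ _)
      (fun (e : S) (row : Fin n × Fin d) =>
        if e.1.1.2 = row.1 then MvPolynomial.X (e.1.1.1, row.2)
        else if e.1.1.1 = row.1 then - MvPolynomial.X (e.1.1.2, row.2)
        else 0)
      (by
        simp only [apply_ite (MvPolynomial.eval₂Hom _ _), map_neg, map_zero,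
          MvPolynomial.coe_eval₂Hom, MvPolynomial.eval₂_X]
        exact h1)
    simp only [apply_ite (algebraMap _ (HK n d)), map_neg, map_zero] at h2
    exact h2
end
end

section
/- Let m, n ≥ 1, 0 ≤ a ≤ m, and 0 ≤ b ≤ n, and set s = m−a and r = n−b. For every subset S ⊆ [m]×[n], the columns of the bipartite rigidity matrix R_{m,n}(a,b) indexed by S are linearly independent (i.e., S is independent in the bipartite rigidity matroid B_{m,n}(a,b)) if and only if the set ([m]×[n]) ∖ S is spanning in the tensor matroid T_{m,n}(m−a, n−b, ℚ). In matroid language: the tensor matroid T_{m,n}(m−a, n−b, 0) is the dual of the bipartite rigidity matroid B_{m,n}(a,b). -/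
open scoped Classical

noncomputable section

/-- The field of fractions of the polynomial ring over `F` in variables
`X i k` (`i ∈ [m]`, `k ∈ [s]`) and `Y j l` (`j ∈ [n]`, `l ∈ [r]`). -/
abbrev TField (F : Type*) [Field F] (m n s r : ℕ) :=
  FractionRing (MvPolynomial ((Fin m × Fin s) ⊕ (Fin n × Fin r)) F)

/-- The vector `u_i ⊗ v_j ∈ K_F^{[s]×[r]}` with `(k,l)`-entry `X_{ik} · Y_{jl}`. -/
noncomputable def tvec (F : Type*) [Field F] (m n s r : ℕ) (e : Fin m × Fin n) :
    Fin s × Fin r → TField F m n s r := fun kl =>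
  algebraMap (MvPolynomial ((Fin m × Fin s) ⊕ (Fin n × Fin r)) F) (TField F m n s r)
      (MvPolynomial.X (Sum.inl (e.1, kl.1))) *
  algebraMap (MvPolynomial ((Fin m × Fin s) ⊕ (Fin n × Fin r)) F) (TField F m n s r)
      (MvPolynomial.X (Sum.inr (e.2, kl.2)))

/-- `E` is independent in the tensor matroid `T_{m,n}(s,r,F)`: the family
`{u_i ⊗ v_j : (i,j) ∈ E}` is linearly independent over `K_F`. -/
def TensorIndep (F : Type*) [Field F] (m n s r : ℕ) (E : Set (Fin m × Fin n)) : Prop :=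
  LinearIndependent (TField F m n s r) (fun e : E => tvec F m n s r e)

/-- `E` is spanning in the tensor matroid `T_{m,n}(s,r,F)`: the family
`{u_i ⊗ v_j : (i,j) ∈ E}` spans `K_F^{[s]×[r]}`. -/
def TensorSpanning (F : Type*) [Field F] (m n s r : ℕ) (E : Set (Fin m × Fin n)) : Prop :=
  Submodule.span (TField F m n s r) (tvec F m n s r '' E) = ⊤

/-- The rational function field `ℚ(x_{pj}, y_{qℓ})` with `(p,j) ∈ [m]×[a]`,
`(q,ℓ) ∈ [n]×[b]`. -/
abbrev RField (m n a b : ℕ) :=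
  FractionRing (MvPolynomial ((Fin m × Fin a) ⊕ (Fin n × Fin b)) ℚ)

/-- The column of the bipartite rigidity matrix `R_{m,n}(a,b)` labeled by
`e ∈ [m]×[n]`: the row labeled `(j,k) ∈ [a]×[n]` has entry `x_{e.1, j}` if `e.2 = k`
and `0` otherwise, and the row labeled `(ℓ,i) ∈ [b]×[m]` has entry `y_{e.2, ℓ}` if
`e.1 = i` and `0` otherwise. -/
noncomputable def rigCol (m n a b : ℕ) (e : Fin m × Fin n) :
    (Fin a × Fin n) ⊕ (Fin b × Fin m) → RField m n a b := fun row =>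
  match row with
  | Sum.inl (j, k) =>
      if e.2 = k then
        algebraMap (MvPolynomial ((Fin m × Fin a) ⊕ (Fin n × Fin b)) ℚ) (RField m n a b)
          (MvPolynomial.X (Sum.inl (e.1, j)))
      else 0
  | Sum.inr (l, i) =>
      if e.1 = i then
        algebraMap (MvPolynomial ((Fin m × Fin a) ⊕ (Fin n × Fin b)) ℚ) (RField m n a b)
          (MvPolynomial.X (Sum.inr (e.2, l)))
      else 0

/-- `G` is independent in the bipartite rigidity matroid `B_{m,n}(a,b)`: the columns of
`R_{m,n}(a,b)` indexed by `G` are linearly independent. -/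
def RigIndep (m n a b : ℕ) (G : Set (Fin m × Fin n)) : Prop :=
  LinearIndependent (RField m n a b) (fun e : G => rigCol m n a b e)


/-- Rows of `P` are linearly independent, spelled out. -/
def RowInd {R ι κ : Type*} [CommRing R] [Fintype ι] (P : ι → κ → R) : Prop :=
  ∀ c : ι → R, (∀ k, ∑ i, c i * P i k = 0) → c = 0

theorem rowInd_iff {R ι κ : Type*} [CommRing R] [Fintype ι] (P : ι → κ → R) :
    RowInd P ↔ LinearIndependent R P := by
  rw [Fintype.linearIndependent_iff]
  constructor
  · intro h g hg
    have := h g (fun k => by simpa using congrFun hg k)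
    intro i; rw [this]; rfl
  · intro h c hc
    funext i
    exact h c (by funext k; simpa using hc k) i

theorem exists_minor {L ι κ : Type*} [Field L] [Fintype ι] [Fintype κ] (P : Matrix ι κ L)
    (h : LinearIndependent L P.row) : ∃ g : ι → κ, (P.submatrix id g).det ≠ 0 := by
  have h1 := h.rank_matrix
  obtain ⟨κ', f, hf, hsp, hli⟩ := exists_linearIndependent' L P.col
  have : Finite κ' := Finite.of_injective f hf
  have : Fintype κ' := Fintype.ofFinite κ'
  have hc : Fintype.card κ' = Fintype.card ι := by
    rw [← h1, Matrix.rank_eq_finrank_span_cols, ← hsp]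
    rw [linearIndependent_iff_card_eq_finrank_span.mp hli, Set.finrank]
  let e : ι ≃ κ' := (Fintype.equivOfCardEq hc).symm
  refine ⟨f ∘ e, ?_⟩
  have : LinearIndependent L (P.submatrix id (f ∘ e)).col := hli.comp e e.injective
  rw [Matrix.linearIndependent_cols_iff_isUnit, Matrix.isUnit_iff_isUnit_det] at this
  exact this.ne_zero

theorem RowInd.spec {R K L ι κ : Type*} [CommRing R] [IsDomain R] [Field K] [Field L]
    [Algebra R K] [IsFractionRing R K] [Fintype ι] [Fintype κ] (φ : R →+* L) (P : ι → κ → R)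
    (h : RowInd (fun i k => φ (P i k))) : RowInd (fun i k => algebraMap R K (P i k)) := by
  rw [rowInd_iff] at h
  obtain ⟨g, hg⟩ := exists_minor (Matrix.of fun i k => φ (P i k)) h
  have h1 : (Matrix.of fun i j => P i (g j)).det ≠ 0 := by
    intro h0
    apply hg
    have := RingHom.map_det φ (Matrix.of fun i j => P i (g j))
    rw [h0, map_zero] at this
    exact this.symm
  have h2 : (Matrix.of fun i j => algebraMap R K (P i (g j))).det ≠ 0 := by
    have := RingHom.map_det (algebraMap R K) (Matrix.of fun i j => P i (g j))
    intro h0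
    apply h1
    apply IsFractionRing.injective R K
    rw [this, map_zero]
    exact h0
  intro c hc
  apply Matrix.eq_zero_of_vecMul_eq_zero h2
  funext j
  exact hc (g j)

/-- rigidity columns for arbitrary matrices -/
def rigG {R : Type*} [CommRing R] {m n a b : ℕ} (A : Fin m → Fin a → R) (B : Fin n → Fin b → R)
    (e : Fin m × Fin n) : (Fin a × Fin n) ⊕ (Fin b × Fin m) → R
  | Sum.inl (j, k) => if e.2 = k then A e.1 j else 0
  | Sum.inr (l, i) => if e.1 = i then B e.2 l else 0

/-- tensor vectors for arbitrary matrices -/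
def tenG {R : Type*} [CommRing R] {m n s r : ℕ} (U : Fin m → Fin s → R) (V : Fin n → Fin r → R)
    (kl : Fin s × Fin r) (e : Fin m × Fin n) : R := U e.1 kl.1 * V e.2 kl.2

def RigI {R : Type*} [CommRing R] {m n a b : ℕ} (A : Matrix (Fin m) (Fin a) R)
    (B : Matrix (Fin n) (Fin b) R) (S : Set (Fin m × Fin n)) : Prop :=
  ∀ C : Matrix (Fin m) (Fin n) R, (∀ i j, (i, j) ∉ S → C i j = 0) →
    A.transpose * C = 0 → C * B = 0 → C = 0

def TenI {R : Type*} [CommRing R] {m n s r : ℕ} (U : Matrix (Fin m) (Fin s) R)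
    (V : Matrix (Fin n) (Fin r) R) (S : Set (Fin m × Fin n)) : Prop :=
  ∀ N : Matrix (Fin s) (Fin r) R, (∀ i j, (i, j) ∉ S → (U * N * V.transpose) i j = 0) → N = 0

theorem sum_sub_ext {R : Type*} [CommRing R] {m n : ℕ} (S : Set (Fin m × Fin n))
    (c : S → R) (C f : Fin m → Fin n → R) (h1 : ∀ e : S, C e.1.1 e.1.2 = c e)
    (h2 : ∀ i j, (i, j) ∉ S → C i j = 0) :
    ∑ e : S, c e * f e.1.1 e.1.2 = ∑ i, ∑ j, C i j * f i j := by
  rw [← Fintype.sum_prod_type' (f := fun i j => C i j * f i j)]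
  have e1 : ∑ e : S, c e * f e.1.1 e.1.2 =
      ∑ e : S, (fun x : Fin m × Fin n => C x.1 x.2 * f x.1 x.2) e.1 :=
    Finset.sum_congr rfl fun e _ => by rw [← h1]
  rw [e1, ← Finset.sum_subtype (Finset.univ.filter (fun x => x ∈ S)) (by simp)
    (fun x : Fin m × Fin n => C x.1 x.2 * f x.1 x.2)]
  apply Finset.sum_subset (Finset.subset_univ _)
  intro x _ hx
  rw [h2 x.1 x.2 (by simpa using hx), zero_mul]

theorem rigI_iff {R : Type*} [CommRing R] {m n a b : ℕ} (A : Matrix (Fin m) (Fin a) R)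
    (B : Matrix (Fin n) (Fin b) R) (S : Set (Fin m × Fin n)) :
    RigI A B S ↔ RowInd (fun e : S => rigG A B e.1) := by
  have key : ∀ (c : S → R) (C : Matrix (Fin m) (Fin n) R) (h1 : ∀ e : S, C e.1.1 e.1.2 = c e)
    (h2 : ∀ i j, (i, j) ∉ S → C i j = 0), (∀ k, ∑ e : S, c e * rigG A B e.1 k = 0) ↔
      (A.transpose * C = 0 ∧ C * B = 0) := by
    intro c C h1 h2
    have e1 : ∀ k, ∑ e : S, c e * rigG A B e.1 k = ∑ i, ∑ j, C i j * rigG A B (i, j) k :=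
      fun k => sum_sub_ext S c C (fun i j => rigG A B (i, j) k) h1 h2
    simp only [e1]
    simp only [Sum.forall, Prod.forall, rigG, ← Matrix.ext_iff, Matrix.mul_apply]
    simp [mul_comm]
    intro _
    rw [forall_comm]
  constructor
  · intro h c hc
    let C : Matrix (Fin m) (Fin n) R := fun i j => if h : (i, j) ∈ S then c ⟨(i, j), h⟩ else 0
    have h1 : ∀ e : S, C e.1.1 e.1.2 = c e := fun e => by simp [C]
    have h2 : ∀ i j, (i, j) ∉ S → C i j = 0 := fun i j hij => by simp [C, hij]
    obtain ⟨h3, h4⟩ := (key c C h1 h2).1 hc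
    have := h C h2 h3 h4
    funext e
    rw [← h1, this]; rfl
  · intro h C h2 h3 h4
    have := h (fun e => C e.1.1 e.1.2) ((key _ C (fun _ => rfl) h2).2 ⟨h3, h4⟩)
    ext i j
    by_cases hij : (i, j) ∈ S
    · exact congrFun this ⟨(i, j), hij⟩
    · exact h2 i j hij

theorem tenI_iff {R : Type*} [CommRing R] {m n s r : ℕ} (U : Matrix (Fin m) (Fin s) R)
    (V : Matrix (Fin n) (Fin r) R) (S : Set (Fin m × Fin n)) :
    TenI U V S ↔ RowInd (fun (kl : Fin s × Fin r) (e : (Sᶜ : Set _)) => tenG U V kl e.1) := by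
  have key : ∀ (N : Matrix (Fin s) (Fin r) R) i j, (U * N * V.transpose) i j =
      ∑ kl : Fin s × Fin r, N kl.1 kl.2 * tenG U V kl (i, j) := by
    intro N i j
    simp only [Matrix.mul_apply, Fintype.sum_prod_type, tenG, Finset.sum_mul,
      Matrix.transpose_apply]
    rw [Finset.sum_comm]
    refine Finset.sum_congr rfl fun _ _ => Finset.sum_congr rfl fun _ _ => by ring
  constructor
  · intro h c hc
    have := h (Matrix.of fun k l => c (k, l)) (fun i j hij => by rw [key]; exact hc ⟨(i, j), hij⟩)
    funext kl
    exact congrFun (congrFun this kl.1) kl.2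
  · intro h N hN
    have := h (fun kl => N kl.1 kl.2) (fun e => by rw [← key]; exact hN _ _ e.2)
    ext k l
    exact congrFun this (k, l)

theorem tensorSpanning_iff {L ι κ : Type*} [Field L] [Fintype ι] [Finite κ] (w : κ → ι → L)
    (E : Set κ) :
    Submodule.span L (w '' E) = ⊤ ↔ RowInd (fun (k : ι) (e : E) => w e.1 k) := by
  have : Fintype κ := Fintype.ofFinite κ
  have h0 : w '' E = Set.range (Matrix.of (fun (k : ι) (e : E) => w e.1 k)).col := by
    ext v; simp only [Set.mem_image, Set.mem_range, Subtype.exists]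
    constructor
    · rintro ⟨x, hx, rfl⟩; exact ⟨x, hx, rfl⟩
    · rintro ⟨x, hx, rfl⟩; exact ⟨x, hx, rfl⟩
  rw [rowInd_iff, h0]
  set M := Matrix.of (fun (k : ι) (e : E) => w e.1 k)
  change _ ↔ LinearIndependent L M.row
  rw [linearIndependent_iff_card_eq_finrank_span, Set.finrank, ← M.rank_eq_finrank_span_row,
    M.rank_eq_finrank_span_cols]
  constructor
  · intro h; rw [h]; simp
  · intro h
    apply Submodule.eq_top_of_finrank_eq
    rw [← h]; simp

theorem exists_ker {L : Type*} [Field L] {m a : ℕ} (A : Matrix (Fin m) (Fin a) L) :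
    ∃ U : Matrix (Fin m) (Fin (m - a)) L, A.transpose * U = 0 ∧
      Function.Injective U.mulVec := by
  have h1 : m - a ≤ Module.finrank L (LinearMap.ker A.transpose.mulVecLin) := by
    have h2 := A.transpose.mulVecLin.finrank_range_add_finrank_ker
    have h3 := (LinearMap.range A.transpose.mulVecLin).finrank_le
    simp at h2 h3
    omega
  obtain ⟨f, hf⟩ := exists_linearIndependent_of_le_finrank h1
  refine ⟨Matrix.of fun i k => (f k).1 i, ?_, ?_⟩
  · ext j k
    have := (f k).2
    rw [LinearMap.mem_ker] at this
    exact congrFun this j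
  · rw [Matrix.mulVec_injective_iff]
    exact hf.map' (Submodule.subtype _) (Submodule.ker_subtype _)

theorem exists_coker {L : Type*} [Field L] {m a : ℕ} (ha : a ≤ m)
    (U : Matrix (Fin m) (Fin (m - a)) L) (hU : Function.Injective U.mulVec) :
    ∃ A : Matrix (Fin m) (Fin a) L, ∀ c, A.transpose.mulVec c = 0 → ∃ d, c = U.mulVec d := by
  have h1 : Module.finrank L ((Fin m → L) ⧸ LinearMap.range U.mulVecLin) =
      Module.finrank L (Fin a → L) := by
    have h2 := (LinearMap.range U.mulVecLin).finrank_quotient_add_finrank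
    rw [LinearMap.finrank_range_of_inj (f := U.mulVecLin) hU] at h2
    simp at h2 ⊢
    omega
  let e := LinearEquiv.ofFinrankEq _ _ h1
  refine ⟨(LinearMap.toMatrix' (e.toLinearMap ∘ₗ (LinearMap.range U.mulVecLin).mkQ)).transpose, ?_⟩
  intro c hc
  rw [Matrix.transpose_transpose, LinearMap.toMatrix'_mulVec] at hc
  simp at hc
  obtain ⟨d, hd⟩ := hc
  exact ⟨d, hd.symm⟩

theorem mul_left_inj_of {L : Type*} [Field L] {m s n : ℕ} (U : Matrix (Fin m) (Fin s) L)
    (hU : Function.Injective U.mulVec) (D : Matrix (Fin s) (Fin n) L) (h : U * D = 0) : D = 0 := by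
  ext k j
  have : D.col j = 0 := by
    apply hU
    rw [Matrix.mulVec_zero]
    funext i
    exact congrFun (congrFun h i) j
  exact congrFun this k

theorem tenI_of_rigI {L : Type*} [Field L] {m n a b s r : ℕ} (A : Matrix (Fin m) (Fin a) L)
    (B : Matrix (Fin n) (Fin b) L) (U : Matrix (Fin m) (Fin s) L) (V : Matrix (Fin n) (Fin r) L)
    (S : Set (Fin m × Fin n))
    (hA : A.transpose * U = 0) (hB : B.transpose * V = 0) (hU : Function.Injective U.mulVec)
    (hV : Function.Injective V.mulVec) (h : RigI A B S) : TenI U V S := by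
  intro N hN
  have h1 := h (U * N * V.transpose) hN (by rw [← Matrix.mul_assoc, ← Matrix.mul_assoc, hA]; simp)
    (by
      have : V.transpose * B = 0 := by
        rw [← Matrix.transpose_transpose B, ← Matrix.transpose_mul, hB, Matrix.transpose_zero]
      rw [Matrix.mul_assoc, this, Matrix.mul_zero])
  rw [Matrix.mul_assoc] at h1
  have h2 := mul_left_inj_of U hU _ h1
  have h3 := mul_left_inj_of V hV N.transpose (by
    rw [← Matrix.transpose_transpose V, ← Matrix.transpose_mul, h2, Matrix.transpose_zero])
  rw [← Matrix.transpose_transpose N, h3, Matrix.transpose_zero]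

theorem factor_of {L : Type*} [Field L] {m a s n : ℕ} (A : Matrix (Fin m) (Fin a) L)
    (U : Matrix (Fin m) (Fin s) L)
    (hA : ∀ c, A.transpose.mulVec c = 0 → ∃ d, c = U.mulVec d) (C : Matrix (Fin m) (Fin n) L)
    (hC : A.transpose * C = 0) : ∃ D : Matrix (Fin s) (Fin n) L, C = U * D := by
  have : ∀ j, ∃ d, C.col j = U.mulVec d := fun j => hA _ (by
    funext i; exact congrFun (congrFun hC i) j)
  choose d hd using this
  refine ⟨Matrix.of fun k j => d j k, ?_⟩
  ext i j
  exact congrFun (hd j) i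

theorem rigI_of_tenI {L : Type*} [Field L] {m n a b s r : ℕ} (A : Matrix (Fin m) (Fin a) L)
    (B : Matrix (Fin n) (Fin b) L) (U : Matrix (Fin m) (Fin s) L) (V : Matrix (Fin n) (Fin r) L)
    (S : Set (Fin m × Fin n)) (hU : Function.Injective U.mulVec)
    (hA : ∀ c, A.transpose.mulVec c = 0 → ∃ d, c = U.mulVec d)
    (hB : ∀ c, B.transpose.mulVec c = 0 → ∃ d, c = V.mulVec d)
    (h : TenI U V S) : RigI A B S := by
  intro C hS hAC hCB
  obtain ⟨D, rfl⟩ := factor_of A U hA C hAC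
  rw [Matrix.mul_assoc] at hCB
  have h1 := mul_left_inj_of U hU _ hCB
  obtain ⟨N, hN⟩ := factor_of B V hB D.transpose (by
    rw [← Matrix.transpose_mul, h1, Matrix.transpose_zero])
  have h2 : D = N.transpose * V.transpose := by
    rw [← Matrix.transpose_mul, ← hN, Matrix.transpose_transpose]
  have h3 := h N.transpose (by rw [Matrix.mul_assoc, ← h2]; exact hS)
  rw [h2, h3]; simp

theorem generic_inj {R K : Type*} [CommRing R] [IsDomain R] [Field K] [Algebra R K]
    [IsFractionRing R K] {m s : ℕ} (hs : s ≤ m) (φ : R →+* ℚ) (P : Fin m → Fin s → R)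
    (hP : ∀ i k, φ (P i k) = if i.1 = k.1 then 1 else 0) :
    Function.Injective (Matrix.mulVec (Matrix.of fun i k => algebraMap R K (P i k))) := by
  rw [Matrix.mulVec_injective_iff]
  refine (rowInd_iff (fun k i => algebraMap R K (P i k))).1 ?_
  refine RowInd.spec φ (fun k i => P i k) ?_
  intro c hc
  funext k
  have := hc (Fin.castLE hs k)
  simpa [hP, ← Fin.ext_iff] using this

theorem tensor_dual_bipartite_rigidity (m n a b : ℕ) (hm : 1 ≤ m) (hn : 1 ≤ n)
    (ha : a ≤ m) (hb : b ≤ n) (S : Set (Fin m × Fin n)) :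
    RigIndep m n a b S ↔ TensorSpanning ℚ m n (m - a) (n - b) Sᶜ := by
  let R1 := MvPolynomial ((Fin m × Fin a) ⊕ (Fin n × Fin b)) ℚ
  let R2 := MvPolynomial ((Fin m × Fin (m - a)) ⊕ (Fin n × Fin (n - b))) ℚ
  let A0 : Matrix (Fin m) (Fin a) R1 := fun i k => MvPolynomial.X (Sum.inl (i, k))
  let B0 : Matrix (Fin n) (Fin b) R1 := fun i k => MvPolynomial.X (Sum.inr (i, k))
  let U0 : Matrix (Fin m) (Fin (m - a)) R2 := fun i k => MvPolynomial.X (Sum.inl (i, k))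
  let V0 : Matrix (Fin n) (Fin (n - b)) R2 := fun i k => MvPolynomial.X (Sum.inr (i, k))
  let K1 := RField m n a b
  let K2 := TField ℚ m n (m - a) (n - b)
  let A1 : Matrix (Fin m) (Fin a) K1 := Matrix.of fun i k => algebraMap R1 K1 (A0 i k)
  let B1 : Matrix (Fin n) (Fin b) K1 := Matrix.of fun i k => algebraMap R1 K1 (B0 i k)
  let U2 : Matrix (Fin m) (Fin (m - a)) K2 := Matrix.of fun i k => algebraMap R2 K2 (U0 i k)
  let V2 : Matrix (Fin n) (Fin (n - b)) K2 := Matrix.of fun i k => algebraMap R2 K2 (V0 i k)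
  have hrig : ∀ {L : Type} [Field L] (φ : R1 →+* L) (e : Fin m × Fin n) k,
      φ (rigG A0 B0 e k) = rigG (fun i k => φ (A0 i k)) (fun i k => φ (B0 i k)) e k := by
    intro L _ φ e k
    rcases k with ⟨j, k⟩ | ⟨l, i⟩ <;> simp only [rigG] <;> split_ifs <;> simp
  have hten : ∀ {L : Type} [Field L] (φ : R2 →+* L) k (e : Fin m × Fin n),
      φ (tenG U0 V0 k e) = tenG (fun i k => φ (U0 i k)) (fun i k => φ (V0 i k)) k e := by
    intro L _ φ e k
    simp [tenG]
  have l1 : RigIndep m n a b S ↔ RigI A1 B1 S := by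
    rw [rigI_iff, rowInd_iff]
    have : (fun e : S => rigG A1 B1 e.1) = fun e : S => rigCol m n a b e := by
      funext e k
      rcases k with ⟨j, k⟩ | ⟨l, i⟩ <;> rfl
    rw [this]; rfl
  have l2 : TensorSpanning ℚ m n (m - a) (n - b) Sᶜ ↔ TenI U2 V2 S := by
    rw [tenI_iff, TensorSpanning, tensorSpanning_iff]
    rfl
  rw [l1, l2]
  constructor
  · intro h
    obtain ⟨U, hU1, hU2⟩ := exists_ker A1
    obtain ⟨V, hV1, hV2⟩ := exists_ker B1
    have h1 := tenI_of_rigI A1 B1 U V S hU1 hV1 hU2 hV2 h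
    rw [tenI_iff] at h1 ⊢
    let φ : R2 →+* K1 := (MvPolynomial.aeval
      (Sum.elim (fun p => U p.1 p.2) (fun p => V p.1 p.2)) : R2 →ₐ[ℚ] K1).toRingHom
    have h2 := RowInd.spec (K := K2) φ (fun kl (e : (Sᶜ : Set _)) => tenG U0 V0 kl e.1) (by
      simp only [hten]
      have hu : (fun i k => φ (U0 i k)) = U := by funext i k; exact MvPolynomial.aeval_X _ _
      have hv : (fun i k => φ (V0 i k)) = V := by funext i k; exact MvPolynomial.aeval_X _ _
      rw [hu, hv]; exact h1)
    simp only [hten] at h2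
    exact h2
  · intro h
    have hU : Function.Injective U2.mulVec := generic_inj (Nat.sub_le _ _)
      (MvPolynomial.aeval (Sum.elim (fun p => if p.1.1 = p.2.1 then 1 else 0) (fun p => 0)) :
        R2 →ₐ[ℚ] ℚ).toRingHom U0 (by intro i k; simp [U0])
    have hV : Function.Injective V2.mulVec := generic_inj (Nat.sub_le _ _)
      (MvPolynomial.aeval (Sum.elim (fun p => 0) (fun p => if p.1.1 = p.2.1 then 1 else 0)) :
        R2 →ₐ[ℚ] ℚ).toRingHom V0 (by intro i k; simp [V0])
    obtain ⟨A, hA⟩ := exists_coker ha U2 hU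
    obtain ⟨B, hB⟩ := exists_coker hb V2 hV
    have h1 := rigI_of_tenI A B U2 V2 S hU hA hB h
    rw [rigI_iff] at h1 ⊢
    let φ : R1 →+* K2 := (MvPolynomial.aeval
      (Sum.elim (fun p => A p.1 p.2) (fun p => B p.1 p.2)) : R1 →ₐ[ℚ] K2).toRingHom
    have h2 := RowInd.spec (K := K1) φ (fun (e : S) k => rigG A0 B0 e.1 k) (by
      simp only [hrig]
      have hu : (fun i k => φ (A0 i k)) = A := by funext i k; exact MvPolynomial.aeval_X _ _
      have hv : (fun i k => φ (B0 i k)) = B := by funext i k; exact MvPolynomial.aeval_X _ _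
      rw [hu, hv]; exact h1)
    simp only [hrig] at h2
    exact h2
end
end

section
/- Let F be a field and let m, n, s, r be integers with 0 ≤ s ≤ m and 0 ≤ r ≤ n. Let A_1, …, A_m ⊆ [n] be pairwise disjoint sets, and set E = ∪_{i∈[m]} {i}×A_i ⊆ [m]×[n]. Then E is independent in the tensor matroid T_{m,n}(s,r,F) if and only if |A_i| ≤ r for every i ∈ [m] and ∑_{i=1}^m |A_i| ≤ s·r. -/
open scoped Classical

noncomputable section

theorem tensor_aux_pos (m n : ℕ) (A : Fin m → Finset (Fin n)) :
    ∃ pos : {p : Fin m × Fin n | p.2 ∈ A p.1} ≃ Fin (∑ i, (A i).card),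
      ∀ a b : {p : Fin m × Fin n | p.2 ∈ A p.1}, a.1.1 = b.1.1 →
        (pos a : ℕ) < pos b + (A a.1.1).card := by
  let e1 : {p : Fin m × Fin n | p.2 ∈ A p.1} ≃ (Σ i : Fin m, (A i : Finset (Fin n))) :=
    { toFun := fun p => ⟨p.1.1, ⟨p.1.2, p.2⟩⟩
      invFun := fun q => ⟨(q.1, q.2.1), q.2.2⟩
      left_inv := fun p => rfl
      right_inv := fun q => rfl }
  let e2 : (Σ i : Fin m, (A i : Finset (Fin n))) ≃ (Σ i : Fin m, Fin (A i).card) :=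
    Equiv.sigmaCongrRight fun i => (A i).equivFin
  refine ⟨(e1.trans e2).trans finSigmaFinEquiv, ?_⟩
  rintro ⟨⟨i, j⟩, h⟩ ⟨⟨i', j'⟩, h'⟩ hi
  simp only at hi
  subst hi
  have key : ∀ k k' : Fin (A i).card,
      ((finSigmaFinEquiv (n := fun i => (A i).card) ⟨i, k⟩ : Fin _) : ℕ) <
        (finSigmaFinEquiv (n := fun i => (A i).card) ⟨i, k'⟩ : Fin _) + (A i).card := by
    intro k k'
    rw [finSigmaFinEquiv_apply, finSigmaFinEquiv_apply]
    have := k.2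
    simp only
    omega
  exact key _ _

theorem tensor_aux_kernel {D ι : Type*} [CommRing D] [IsDomain D] [Fintype ι]
    {m r : ℕ} (t : Fin m → D) (ht : Function.Injective t) (row : ι → Fin m) (pos : ι → ℕ)
    (hinj : Function.Injective pos)
    (hdown : ∀ a, ∀ q ≤ pos a, ∃ b, pos b = q)
    (hrow : ∀ a b, row a = row b → pos a % r = pos b % r → a = b)
    (c : ι → D)
    (hc : ∀ b, ∑ a, c a * (t (row a) ^ (pos b / r) * if pos b % r = pos a % r then 1 else 0) = 0) :
    c = 0 := by
  by_contra hne
  obtain ⟨a0, ha0⟩ : ∃ a, c a ≠ 0 := Function.ne_iff.mp hne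
  obtain ⟨a, ha, hmax⟩ := Finset.exists_max_image (Finset.univ.filter fun a => c a ≠ 0) pos
    ⟨a0, by simpa using ha0⟩
  simp only [Finset.mem_filter, Finset.mem_univ, true_and] at ha hmax
  let S : Finset ι := Finset.univ.filter fun b => pos b % r = pos a % r ∧ pos b < pos a
  let p : Polynomial D := ∏ b ∈ S, (Polynomial.X - Polynomial.C (t (row b)))
  have hdeg : p.natDegree ≤ pos a / r := by
    have h1 : p.natDegree = S.card := by
      simp only [p]
      rw [Polynomial.natDegree_prod_of_monic _ _ (fun b _ => Polynomial.monic_X_sub_C _)]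
      simp
    rw [h1]
    have : S.card ≤ (Finset.range (pos a / r)).card := by
      apply Finset.card_le_card_of_injOn (fun b => pos b / r)
      · intro b hb
        simp only [S, Finset.coe_filter, Finset.mem_univ, true_and, Set.mem_ofPred_eq] at hb
        simp only [Finset.coe_range, Set.mem_Iio]
        have h2 := Nat.div_add_mod (pos b) r
        have h3 := Nat.div_add_mod (pos a) r
        by_contra hcon
        have := Nat.mul_le_mul_left r (not_lt.mp hcon)
        omega
      · intro b hb b' hb' hbb
        simp only [S, Finset.coe_filter, Finset.mem_univ, true_and, Set.mem_ofPred_eq] at hb hb' hbb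
        apply hinj
        rw [← Nat.div_add_mod (pos b) r, ← Nat.div_add_mod (pos b') r, hbb, hb.1, hb'.1]
    simpa using this
  have key : ∑ b, c b * ((p.eval (t (row b))) * if pos a % r = pos b % r then 1 else 0) = 0 := by
    have h1 : ∀ k ≤ pos a / r,
        ∑ b, c b * (t (row b) ^ k * if pos a % r = pos b % r then 1 else 0) = 0 := by
      intro k hk
      have h3 := Nat.div_add_mod (pos a) r
      have h4 := Nat.mul_le_mul_left r hk
      obtain ⟨b, hb⟩ := hdown a (r * k + pos a % r) (by omega)
      have h5 := hc b
      rcases Nat.eq_zero_or_pos r with h0 | hrp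
      · subst h0
        simp only [Nat.div_zero, Nat.le_zero] at hk
        subst hk
        simpa using hc a
      have h6 : pos b / r = k := by
        rw [hb, Nat.mul_add_div hrp, Nat.div_eq_of_lt (Nat.mod_lt _ hrp), add_zero]
      have h7 : pos b % r = pos a % r := by
        rw [hb, Nat.mul_add_mod, Nat.mod_mod]
      rw [h6, h7] at h5
      exact h5
    have h2 : ∀ b, c b * ((p.eval (t (row b))) * if pos a % r = pos b % r then 1 else 0)
        = ∑ k ∈ Finset.range (pos a / r + 1), p.coeff k *
          (c b * (t (row b) ^ k * if pos a % r = pos b % r then 1 else 0)) := by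
      intro b
      rw [Polynomial.eval_eq_sum_range' (Nat.lt_succ_of_le hdeg), Finset.sum_mul, Finset.mul_sum]
      apply Finset.sum_congr rfl
      intro k _
      ring
    simp_rw [h2]
    rw [Finset.sum_comm]
    apply Finset.sum_eq_zero
    intro k hk
    rw [← Finset.mul_sum, h1 k (by simpa [Nat.lt_succ_iff] using hk), mul_zero]
  rw [Finset.sum_eq_single a] at key
  · simp only [if_true, mul_one, mul_eq_zero, ha, false_or] at key
    simp only [p, Polynomial.eval_prod, Finset.prod_eq_zero_iff] at key
    obtain ⟨b, hb, hb0⟩ := key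
    simp only [S, Finset.mem_filter, Finset.mem_univ, true_and] at hb
    simp only [Polynomial.eval_sub, Polynomial.eval_X, Polynomial.eval_C, sub_eq_zero] at hb0
    have := hrow _ _ (ht hb0) hb.1.symm
    subst this
    omega
  · intro b _ hba
    by_cases hcb : c b = 0
    · simp [hcb]
    by_cases hm : pos a % r = pos b % r
    · have hle := hmax b hcb
      have hlt : pos b < pos a := lt_of_le_of_ne hle (fun h => hba (hinj h))
      have : p.eval (t (row b)) = 0 := by
        simp only [p, Polynomial.eval_prod]
        apply Finset.prod_eq_zero (i := b)
        · simp [S, hm, hlt]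
        · simp
      simp [this]
    · simp [hm]
  · simp

theorem tensor_aux_suff (F : Type*) [Field F] (m n s r : ℕ)
    (A : Fin m → Finset (Fin n)) (hdisj : ∀ i j : Fin m, i ≠ j → Disjoint (A i) (A j))
    (h1 : ∀ i, (A i).card ≤ r) (h2 : ∑ i, (A i).card ≤ s * r) :
    TensorIndep F m n s r {p : Fin m × Fin n | p.2 ∈ A p.1} := by
  obtain ⟨pos, hpos⟩ := tensor_aux_pos m n A
  unfold TensorIndep
  generalize hE : {p : Fin m × Fin n | p.2 ∈ A p.1} = E at *
  have hmem : ∀ e : E, e.1.2 ∈ A e.1.1 := by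
    intro e
    have : e.1 ∈ {p : Fin m × Fin n | p.2 ∈ A p.1} := by
      rw [hE]
      exact e.2
    exact this
  have hcol : ∀ a b : E, a.1.2 = b.1.2 → a = b := by
    intro a b hab
    have hi : a.1.1 = b.1.1 := by
      by_contra hne
      exact Finset.disjoint_left.mp (hdisj _ _ hne) (hmem a) (hab ▸ hmem b)
    exact Subtype.ext (Prod.ext hi hab)
  have hlt : ∀ a : E, (pos a : ℕ) < s * r := fun a => lt_of_lt_of_le (pos a).2 h2
  have hrp : ∀ a : E, 0 < r := fun a => Nat.pos_of_ne_zero (by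
    rintro rfl
    simpa using hlt a)
  let σ : E → Fin s × Fin r := fun a =>
    (⟨(pos a : ℕ) / r, Nat.div_lt_of_lt_mul (by rw [mul_comm]; exact hlt a)⟩,
      ⟨(pos a : ℕ) % r, Nat.mod_lt _ (hrp a)⟩)
  let M : Matrix E E (MvPolynomial ((Fin m × Fin s) ⊕ (Fin n × Fin r)) F) := fun e e' =>
    MvPolynomial.X (Sum.inl (e.1.1, (σ e').1)) * MvPolynomial.X (Sum.inr (e.1.2, (σ e').2))
  let t : Fin m → Polynomial F := fun i => Polynomial.X ^ (i : ℕ)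
  have ht : Function.Injective t := by
    intro i j hij
    have := congrArg Polynomial.natDegree hij
    simp only [t, Polynomial.natDegree_X_pow] at this
    exact Fin.ext this
  let φ : (MvPolynomial ((Fin m × Fin s) ⊕ (Fin n × Fin r)) F) →+* Polynomial F := (MvPolynomial.aeval (R := F) (Sum.elim
    (fun ik : Fin m × Fin s => t ik.1 ^ (ik.2 : ℕ))
    (fun jl : Fin n × Fin r =>
      if ∃ e : E, e.1.2 = jl.1 ∧ (jl.2 : ℕ) = (pos e : ℕ) % r then 1 else 0))).toRingHom
  have hφM : ∀ e e' : E, φ (M e e') = t e.1.1 ^ ((pos e' : ℕ) / r) *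
      if (pos e' : ℕ) % r = (pos e : ℕ) % r then 1 else 0 := by
    intro e e'
    have : (∃ x : E, x.1.2 = e.1.2 ∧ (pos e' : ℕ) % r = (pos x : ℕ) % r) ↔
        (pos e' : ℕ) % r = (pos e : ℕ) % r := by
      constructor
      · rintro ⟨x, hx, hx2⟩
        rw [hcol _ _ hx] at hx2
        exact hx2
      · intro h
        exact ⟨e, rfl, h⟩
    simp only [M, φ, map_mul, AlgHom.toRingHom_eq_coe, RingHom.coe_coe, MvPolynomial.aeval_X,
      Sum.elim_inl, Sum.elim_inr, σ, this]
  have hdet : M.det ≠ 0 := by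
    intro h0
    have h3 : (φ.mapMatrix M).det = 0 := by
      rw [← RingHom.map_det, h0, map_zero]
    obtain ⟨c, hc0, hc⟩ := Matrix.exists_vecMul_eq_zero_iff.mpr h3
    apply hc0
    refine tensor_aux_kernel (r := r) t ht (fun e : E => e.1.1) (fun e => (pos e : ℕ))
      (fun a b hab => pos.injective (Fin.ext hab)) ?_ ?_ c ?_
    · intro a q hq
      exact ⟨pos.symm ⟨q, lt_of_le_of_lt hq (pos a).2⟩, by simp⟩
    · intro a b hab hmod
      have h4 := hpos a b hab
      have h5 := hpos b a hab.symm
      have h6 := h1 a.1.1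
      have h7 := h1 b.1.1
      apply pos.injective
      apply Fin.ext
      have h8 : (pos a : ℕ) < pos b + r := by omega
      have h9 : (pos b : ℕ) < pos a + r := by omega
      rcases le_total (pos a : ℕ) (pos b) with hle | hle
      · have := (Nat.modEq_iff_dvd' hle).mp hmod
        have := Nat.eq_zero_of_dvd_of_lt this (by omega)
        omega
      · have := (Nat.modEq_iff_dvd' hle).mp hmod.symm
        have := Nat.eq_zero_of_dvd_of_lt this (by omega)
        omega
    · intro b
      have h4 := congrFun hc b
      simp only [Matrix.vecMul, dotProduct, RingHom.mapMatrix_apply, Matrix.map_apply, hφM,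
        Pi.zero_apply] at h4
      exact h4
  let ψ := algebraMap (MvPolynomial ((Fin m × Fin s) ⊕ (Fin n × Fin r)) F) (TField F m n s r)
  have hdet2 : (ψ.mapMatrix M).det ≠ 0 := by
    rw [← RingHom.map_det]
    intro h0
    exact hdet ((map_eq_zero_iff ψ (IsFractionRing.injective (MvPolynomial ((Fin m × Fin s) ⊕ (Fin n × Fin r)) F) (TField F m n s r))).mp h0)
  have hli := Matrix.linearIndependent_rows_of_det_ne_zero hdet2
  apply LinearIndependent.of_comp (LinearMap.funLeft (TField F m n s r) (TField F m n s r) σ)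
  have heq : (⇑(LinearMap.funLeft (TField F m n s r) (TField F m n s r) σ) ∘
      fun e : E => tvec F m n s r e) = fun e => ψ.mapMatrix M e := by
    funext e e'
    exact (map_mul ψ _ _).symm
  rw [heq]
  exact hli

theorem tensor_aux_nec (F : Type*) [Field F] (m n s r : ℕ)
    (A : Fin m → Finset (Fin n))
    (h : TensorIndep F m n s r {p : Fin m × Fin n | p.2 ∈ A p.1}) :
    (∀ i, (A i).card ≤ r) ∧ ∑ i, (A i).card ≤ s * r := by
  unfold TensorIndep at h
  constructor
  · intro i
    let ψ := algebraMap (MvPolynomial ((Fin m × Fin s) ⊕ (Fin n × Fin r)) F) (TField F m n s r)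
    let g : A i → {p : Fin m × Fin n | p.2 ∈ A p.1} := fun j => ⟨(i, j.1), j.2⟩
    have hg : Function.Injective g := by
      intro a b hab
      exact Subtype.ext (congrArg (fun x => x.1.2) hab)
    have h1 := h.comp g hg
    let L : (Fin r → TField F m n s r) →ₗ[TField F m n s r]
        (Fin s × Fin r → TField F m n s r) :=
      { toFun := fun f kl => ψ (MvPolynomial.X (Sum.inl (i, kl.1))) * f kl.2
        map_add' := by
          intro f f'
          funext kl
          simp [mul_add]
        map_smul' := by
          intro a f
          funext kl
          simp [mul_left_comm] }
    have h2 : LinearIndependent (TField F m n s r)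
        (fun (j : A i) (l : Fin r) => ψ (MvPolynomial.X (Sum.inr (j.1, l)))) := by
      apply LinearIndependent.of_comp L
      exact h1
    have h3 := h2.fintype_card_le_finrank
    simpa using h3
  · obtain ⟨pos, -⟩ := tensor_aux_pos m n A
    have h3 := h.fintype_card_le_finrank
    rw [Fintype.card_congr pos] at h3
    simpa using h3

theorem disjoint_case (F : Type*) [Field F] (m n s r : ℕ) (hs : s ≤ m) (hr : r ≤ n)
    (A : Fin m → Finset (Fin n)) (hdisj : ∀ i j : Fin m, i ≠ j → Disjoint (A i) (A j)) :
    TensorIndep F m n s r {p : Fin m × Fin n | p.2 ∈ A p.1} ↔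
      (∀ i, (A i).card ≤ r) ∧ ∑ i, (A i).card ≤ s * r := by
  exact ⟨tensor_aux_nec F m n s r A, fun h => tensor_aux_suff F m n s r A hdisj h.1 h.2⟩
end
end

section
/- Let F be a field and let m, n, r be integers with 1 ≤ m and 0 ≤ r ≤ n. Let A_1, …, A_m ⊆ [n] and set E = ∪_{i∈[m]} {i}×A_i ⊆ [m]×[n]. Then E is independent in the tensor matroid T_{m,n}(1,r,F) if and only if |A_i ∩ A_j| = 0 for all distinct i, j ∈ [m] and ∑_{i=1}^m |A_i| ≤ r. -/
open scoped Classical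

noncomputable section

theorem case_s_eq_one (F : Type*) [Field F] (m n r : ℕ) (hm : 1 ≤ m) (hr : r ≤ n)
    (A : Fin m → Finset (Fin n)) :
    TensorIndep F m n 1 r {p : Fin m × Fin n | p.2 ∈ A p.1} ↔
      (∀ i j : Fin m, i ≠ j → (A i ∩ A j).card = 0) ∧ ∑ i, (A i).card ≤ r := by
  have hX : ∀ i : (Fin m × Fin 1) ⊕ (Fin n × Fin r),
      algebraMap (MvPolynomial ((Fin m × Fin 1) ⊕ (Fin n × Fin r)) F) (TField F m n 1 r)
        (MvPolynomial.X i) ≠ 0 := by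
    intro i h
    rw [map_eq_zero_iff _ (IsFractionRing.injective _ _)] at h
    exact MvPolynomial.X_ne_zero i h
  have hcard : Fintype.card {p : Fin m × Fin n | p.2 ∈ A p.1} = ∑ i, (A i).card := by
    rw [← Finset.card_sigma, ← Set.toFinset_card]
    refine Finset.card_bij (fun p _ => ⟨p.1, p.2⟩) ?_ ?_ ?_
    · intro p hp
      simpa using hp
    · rintro ⟨a, b⟩ _ ⟨c, d⟩ _ h
      simpa using h
    · rintro ⟨a, b⟩ h
      exact ⟨(a, b), by simpa using h, rfl⟩
  constructor
  · intro h
    unfold TensorIndep at h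
    refine ⟨?_, ?_⟩
    · intro i j hij
      by_contra hne
      obtain ⟨x, hx⟩ := Finset.card_ne_zero.mp hne
      rw [Finset.mem_inter] at hx
      let e : Fin 2 → {p : Fin m × Fin n | p.2 ∈ A p.1} := ![⟨(i, x), hx.1⟩, ⟨(j, x), hx.2⟩]
      have he : Function.Injective e := by
        intro a b hab
        fin_cases a <;> fin_cases b <;> simp [e, hij, hij.symm] at hab ⊢
      have h2 := Fintype.linearIndependent_iff.mp (h.comp e he)
        ![algebraMap (MvPolynomial ((Fin m × Fin 1) ⊕ (Fin n × Fin r)) F) _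
            (MvPolynomial.X (Sum.inl (j, 0))),
          - algebraMap (MvPolynomial ((Fin m × Fin 1) ⊕ (Fin n × Fin r)) F) _
            (MvPolynomial.X (Sum.inl (i, 0)))] (by
          funext kl
          obtain ⟨k, l⟩ := kl
          obtain rfl : k = 0 := Subsingleton.elim _ _
          simp [Fin.sum_univ_two, e, tvec]
          ring) 0
      exact hX _ h2
    · have := h.fintype_card_le_finrank
      rw [hcard] at this
      simpa using this
  · rintro ⟨hd, hs⟩
    rw [← hcard] at hs
    obtain ⟨φ⟩ : Nonempty ({p : Fin m × Fin n | p.2 ∈ A p.1} ↪ Fin r) :=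
      Function.Embedding.nonempty_of_card_le (by simpa using hs)
    have hinj : ∀ e e' : {p : Fin m × Fin n | p.2 ∈ A p.1}, e.1.2 = e'.1.2 → e = e' := by
      rintro ⟨⟨a, b⟩, h⟩ ⟨⟨c, d⟩, h'⟩ hbd
      simp only [Set.mem_ofPred_eq] at h h' hbd
      subst hbd
      by_cases hac : a = c
      · subst hac; rfl
      · have := hd a c hac
        rw [Finset.card_eq_zero] at this
        have hb : b ∈ A a ∩ A c := Finset.mem_inter.mpr ⟨h, h'⟩
        simp [this] at hb
    let M : Matrix {p : Fin m × Fin n | p.2 ∈ A p.1} {p : Fin m × Fin n | p.2 ∈ A p.1}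
        (MvPolynomial ((Fin m × Fin 1) ⊕ (Fin n × Fin r)) F) :=
      Matrix.of fun e e' => MvPolynomial.X (Sum.inl (e.1.1, 0)) *
        MvPolynomial.X (Sum.inr (e.1.2, φ e'))
    let g : (Fin m × Fin 1) ⊕ (Fin n × Fin r) → F :=
      Sum.elim (fun _ => 1) (fun jl => if ∃ e, e.1.2 = jl.1 ∧ φ e = jl.2 then 1 else 0)
    have hM : (MvPolynomial.eval g).mapMatrix M = 1 := by
      ext e e'
      simp only [RingHom.mapMatrix_apply, Matrix.map_apply, M, Matrix.of_apply, map_mul,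
        MvPolynomial.eval_X, g, Sum.elim_inl, Sum.elim_inr, one_mul, Matrix.one_apply]
      congr 1
      apply propext
      constructor
      · rintro ⟨a, h1, h2⟩
        rw [← hinj _ _ h1, φ.injective h2]
      · rintro rfl
        exact ⟨e, rfl, rfl⟩
    have hdet : M.det ≠ 0 := by
      intro h0
      have := RingHom.map_det (MvPolynomial.eval g) M
      rw [hM, h0] at this
      simp at this
    have hdet' : ((algebraMap _ (TField F m n 1 r)).mapMatrix M).det ≠ 0 := by
      rw [← RingHom.map_det]
      intro h0
      rw [map_eq_zero_iff _ (IsFractionRing.injective _ _)] at h0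
      exact hdet h0
    have hli := Matrix.linearIndependent_rows_of_det_ne_zero hdet'
    refine LinearIndependent.of_comp (LinearMap.funLeft (TField F m n 1 r) (TField F m n 1 r)
      (fun e : {p : Fin m × Fin n | p.2 ∈ A p.1} => ((0 : Fin 1), φ e))) ?_
    convert hli using 1
    · funext e e'
      simp [tvec, M, LinearMap.funLeft_apply]
    · rfl
end
end

section
/- Let F be a field and let m, n, r be integers with 2 ≤ m and 0 ≤ r ≤ n. Let A_1, …, A_m ⊆ [n] be sets of size at most r, and set E = ∪_{i∈[m]} {i}×A_i ⊆ [m]×[n]. Then E is independent in the tensor matroid T_{m,n}(2,r,F) if and only if the following three conditions hold: (1) |A_i ∩ A_j ∩ A_k| = 0 for all distinct i, j, k ∈ [m]; (2) for every k ∈ [m], ∑_{1 ≤ i < j ≤ m} |A_i ∩ A_j| + |A_k ∖ ∪_{i ∈ [m]∖{k}} A_i| ≤ r; (3) ∑_{i=1}^m |A_i| ≤ 2r. -/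
open scoped Classical

noncomputable section

/-- number of rows using column `x` -/
def cdeg {m n : ℕ} (A : Fin m → Finset (Fin n)) (x : Fin n) : Finset (Fin m) :=
  Finset.univ.filter (fun i => x ∈ A i)

lemma mem_cdeg {m n : ℕ} (A : Fin m → Finset (Fin n)) (x : Fin n) (i : Fin m) :
    i ∈ cdeg A x ↔ x ∈ A i := by simp [cdeg]

lemma cdeg_le {m n : ℕ} (A : Fin m → Finset (Fin n))
    (h : ∀ i j k : Fin m, i ≠ j → i ≠ k → j ≠ k → (A i ∩ A j ∩ A k).card = 0) (x : Fin n) :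
    (cdeg A x).card ≤ 2 := by
  by_contra hc
  push Not at hc
  obtain ⟨a, ha, b, hb, c, hc, hab, hac, hbc⟩ := Finset.two_lt_card.1 hc
  rw [mem_cdeg] at ha hb hc
  have := h a b c hab hac hbc
  rw [Finset.card_eq_zero] at this
  have h2 : x ∈ A a ∩ A b ∩ A c := by simp [ha, hb, hc]
  simp [this] at h2

lemma sum_card_eq {m n : ℕ} (A : Fin m → Finset (Fin n)) :
    ∑ i, (A i).card = ∑ x, (cdeg A x).card := by
  have h1 : ∀ i, (A i).card = ∑ x, if x ∈ A i then 1 else 0 := by intro i; simp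
  have h2 : ∀ x, (cdeg A x).card = ∑ i, if x ∈ A i then 1 else 0 := by intro i; simp [cdeg]
  simp_rw [h1, h2]
  exact Finset.sum_comm

lemma pairs_card {m : ℕ} (S : Finset (Fin m)) (h : S.card ≤ 2) :
    ((Finset.univ.filter (fun p : Fin m × Fin m => p.1 < p.2)).filter
      (fun p => p.1 ∈ S ∧ p.2 ∈ S)).card = if S.card = 2 then 1 else 0 := by
  split_ifs with h2
  · obtain ⟨a, b, hab, rfl⟩ := Finset.card_eq_two.1 h2
    rcases lt_or_gt_of_ne hab with hl | hl
    · rw [Finset.card_eq_one]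
      refine ⟨(a, b), ?_⟩
      ext ⟨p, q⟩
      simp only [Finset.mem_filter, Finset.mem_univ, Finset.mem_insert, Finset.mem_singleton,
        Prod.mk.injEq]
      grind
    · rw [Finset.card_eq_one]
      refine ⟨(b, a), ?_⟩
      ext ⟨p, q⟩
      simp only [Finset.mem_filter, Finset.mem_univ, Finset.mem_insert, Finset.mem_singleton,
        Prod.mk.injEq]
      grind
  · have h1 : S.card ≤ 1 := by omega
    rw [Finset.card_eq_zero, Finset.filter_eq_empty_iff]
    rintro ⟨p, q⟩ hp ⟨ha, hb⟩
    have := Finset.card_le_one.1 h1 p ha q hb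
    simp [this] at hp

/-- columns used twice -/
def Dset {m n : ℕ} (A : Fin m → Finset (Fin n)) : Finset (Fin n) :=
  Finset.univ.filter (fun x => (cdeg A x).card = 2)

/-- columns used once -/
def Bset {m n : ℕ} (A : Fin m → Finset (Fin n)) : Finset (Fin n) :=
  Finset.univ.filter (fun x => (cdeg A x).card = 1)

lemma sum_pairs {m n : ℕ} (A : Fin m → Finset (Fin n)) (h : ∀ x, (cdeg A x).card ≤ 2) :
    (∑ p ∈ Finset.univ.filter (fun p : Fin m × Fin m => p.1 < p.2),
              (A p.1 ∩ A p.2).card) = (Dset A).card := by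
  have h1 : ∀ p : Fin m × Fin m, (A p.1 ∩ A p.2).card
      = ∑ x, if p.1 ∈ cdeg A x ∧ p.2 ∈ cdeg A x then 1 else 0 := by
    intro p
    rw [← Finset.card_filter]
    congr 1
    ext x
    simp [mem_cdeg]
  simp_rw [h1]
  rw [Finset.sum_comm, Dset, Finset.card_filter]
  refine Finset.sum_congr rfl fun x _ => ?_
  rw [← pairs_card _ (h x), Finset.card_filter]

lemma sum_DB {m n : ℕ} (A : Fin m → Finset (Fin n)) (h : ∀ x, (cdeg A x).card ≤ 2) :
    ∑ i, (A i).card = 2 * (Dset A).card + (Bset A).card := by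
  rw [sum_card_eq, Dset, Bset, Finset.card_filter, Finset.card_filter, Finset.mul_sum,
    ← Finset.sum_add_distrib]
  refine Finset.sum_congr rfl fun x _ => ?_
  have := h x
  split_ifs <;> omega

lemma only_eq {m n : ℕ} (A : Fin m → Finset (Fin n)) (k : Fin m) :
    A k \ (Finset.univ.erase k).biUnion A = (A k).filter (fun x => (cdeg A x).card = 1) := by
  ext x
  simp only [Finset.mem_sdiff, Finset.mem_filter, Finset.mem_biUnion, Finset.mem_erase,
    Finset.mem_univ, and_true]
  refine and_congr_right fun hx => ?_
  rw [Finset.card_eq_one]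
  constructor
  · intro h
    refine ⟨k, ?_⟩
    ext i
    rw [mem_cdeg, Finset.mem_singleton]
    constructor
    · intro hi
      by_contra hne
      exact h ⟨i, hne, hi⟩
    · rintro rfl; exact hx
  · rintro ⟨a, ha⟩ ⟨i, hne, hi⟩
    rw [← mem_cdeg, ha, Finset.mem_singleton] at hi hx
    exact hne (hi.trans hx.symm)

/-- balanced colouring -/
lemma exists_color {m n : ℕ} (B : Finset (Fin n)) (f : Fin n → Fin m) (t : ℕ)
    (hf : ∀ i, (B.filter (fun x => f x = i)).card ≤ t) (hB : B.card ≤ 2 * t) :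
    ∃ c : Fin n → ℕ, (∀ x ∈ B, c x < t) ∧
      (∀ x ∈ B, ∀ y ∈ B, f x = f y → c x = c y → x = y) ∧
      (∀ x ∈ B, ∀ y ∈ B, ∀ z ∈ B, c x = c y → c y = c z → x = y ∨ x = z ∨ y = z) := by
  let g : Fin n → Fin m ×ₗ Fin n := fun x => toLex (f x, x)
  have ginj : ∀ x y, g x = g y → x = y := by
    intro x y h
    have := congrArg (fun z => (ofLex z).2) h
    simpa [g] using this
  let q : Fin n → ℕ := fun x => (B.filter (fun y => g y < g x)).card
  have q_lt : ∀ x ∈ B, ∀ y ∈ B, g x < g y → q x < q y := by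
    intro x hx y hy h
    apply Finset.card_lt_card
    rw [Finset.ssubset_iff_of_subset]
    · exact ⟨x, by simp [hx, h], by simp⟩
    · intro z hz
      simp only [Finset.mem_filter] at hz ⊢
      exact ⟨hz.1, hz.2.trans h⟩
  have q_inj : ∀ x ∈ B, ∀ y ∈ B, q x = q y → x = y := by
    intro x hx y hy h
    rcases lt_trichotomy (g x) (g y) with h1 | h1 | h1
    · have := q_lt x hx y hy h1; omega
    · exact ginj _ _ h1
    · have := q_lt y hy x hx h1; omega
  have q_bd : ∀ x ∈ B, q x < 2 * t := by
    intro x hx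
    refine lt_of_lt_of_le (Finset.card_lt_card ?_) hB
    rw [Finset.ssubset_iff_of_subset (Finset.filter_subset _ _)]
    exact ⟨x, hx, by simp⟩
  have q_close : ∀ x ∈ B, ∀ y ∈ B, f x = f y → q y < q x + t := by
    intro x hx y hy hxy
    have h1 : B.filter (fun z => g z < g y) ⊆
        B.filter (fun z => g z < g x) ∪ (B.filter (fun z => f z = f y)).erase y := by
      intro z hz
      simp only [Finset.mem_filter, Finset.mem_union, Finset.mem_erase] at hz ⊢
      by_cases hzx : g z < g x
      · exact Or.inl ⟨hz.1, hzx⟩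
      · right
        refine ⟨?_, hz.1, ?_⟩
        · rintro rfl; exact lt_irrefl _ hz.2
        · have h2 := hz.2
          simp only [g, Prod.Lex.toLex_lt_toLex, not_or, not_lt] at h2 hzx
          rcases h2 with h2 | h2
          · rw [← hxy] at h2
            exact absurd h2 (not_lt.2 hzx.1)
          · exact h2.1
    have h2 := (Finset.card_le_card h1).trans (Finset.card_union_le _ _)
    have hm : y ∈ B.filter (fun z => f z = f y) := by simp [hy]
    have h3 := Finset.card_erase_lt_of_mem hm
    have h4 := hf (f y)
    show (B.filter (fun z => g z < g y)).card < (B.filter (fun z => g z < g x)).card + t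
    omega
  refine ⟨fun x => if q x < t then q x else q x - t, ?_, ?_, ?_⟩
  · intro x hx
    have := q_bd x hx
    dsimp only
    split_ifs <;> omega
  · intro x hx y hy hxy h
    apply q_inj x hx y hy
    have := q_close x hx y hy hxy
    have := q_close y hy x hx hxy.symm
    dsimp only at h
    split_ifs at h <;> omega
  · intro x hx y hy z hz h h'
    have := q_inj x hx y hy
    have := q_inj x hx z hz
    have := q_inj y hy z hz
    have := q_bd x hx
    have := q_bd y hy
    have := q_bd z hz
    have : q x = q y ∨ q x = q z ∨ q y = q z := by
      dsimp only at h h'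
      split_ifs at h h' <;> omega
    tauto

lemma exists_color_all {m n r : ℕ} (A : Fin m → Finset (Fin n)) (h : ∀ x, (cdeg A x).card ≤ 2)
    (hne : 0 < m)
    (h2 : ∀ k, (Dset A).card + ((A k).filter (fun x => (cdeg A x).card = 1)).card ≤ r)
    (h3 : 2 * (Dset A).card + (Bset A).card ≤ 2 * r) :
    ∃ c : Fin n → ℕ, (∀ i, ∀ x ∈ A i, c x < r) ∧
      (∀ i, ∀ x ∈ A i, ∀ y ∈ A i, c x = c y → x = y) ∧
      (∀ i j k x y z, x ∈ A i → y ∈ A j → z ∈ A k → c x = c y → c y = c z →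
        i = j ∨ i = k ∨ j = k) := by
  have hm0 : Fin m := ⟨0, hne⟩
  have hd : (Dset A).card ≤ r := le_trans (Nat.le_add_right _ _) (h2 hm0)
  have hf : ∀ x, ∃ i, x ∈ Bset A → ∀ j, x ∈ A j ↔ j = i := by
    intro x
    by_cases hx : x ∈ Bset A
    · simp only [Bset, Finset.mem_filter, Finset.mem_univ, true_and] at hx
      obtain ⟨i, hi⟩ := Finset.card_eq_one.1 hx
      refine ⟨i, fun _ j => ?_⟩
      rw [← mem_cdeg, hi, Finset.mem_singleton]
    · exact ⟨hm0, fun h => absurd h hx⟩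
  choose f hf using hf
  obtain ⟨c, c1, c2, c3⟩ := exists_color (Bset A) f (r - (Dset A).card) (by
    intro i
    have : (Bset A).filter (fun x => f x = i) ⊆
        (A i).filter (fun x => (cdeg A x).card = 1) := by
      intro x hx
      simp only [Finset.mem_filter] at hx ⊢
      refine ⟨(hf x hx.1 i).2 hx.2.symm, ?_⟩
      have := hx.1
      simpa [Bset] using this
    have := Finset.card_le_card this
    have := h2 i
    omega) (by omega)
  let e := (Dset A).equivFin
  let c' : Fin n → ℕ := fun x => if hx : x ∈ Dset A then e ⟨x, hx⟩ else (Dset A).card + c x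
  have cD : ∀ x ∈ Dset A, c' x < (Dset A).card := by
    intro x hx; simp [c', hx]
  have cDi : ∀ x ∈ Dset A, ∀ y ∈ Dset A, c' x = c' y → x = y := by
    intro x hx y hy hxy
    simp only [c', hx, hy, dif_pos] at hxy
    have := e.injective (Fin.ext hxy)
    simpa using this
  have cB : ∀ x ∉ Dset A, c' x = (Dset A).card + c x := by
    intro x hx; simp [c', hx]
  have DB : ∀ i, ∀ x ∈ A i, x ∉ Dset A → x ∈ Bset A := by
    intro i x hx hD
    have h1 : 0 < (cdeg A x).card := Finset.card_pos.2 ⟨i, (mem_cdeg _ _ _).2 hx⟩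
    have h2 := h x
    simp only [Dset, Bset, Finset.mem_filter, Finset.mem_univ, true_and] at hD ⊢
    omega
  refine ⟨c', ?_, ?_, ?_⟩
  · intro i x hx
    by_cases hD : x ∈ Dset A
    · exact (cD x hD).trans_le hd
    · have := c1 x (DB i x hx hD)
      rw [cB x hD]; omega
  · intro i x hx y hy hxy
    by_cases hD : x ∈ Dset A <;> by_cases hD' : y ∈ Dset A
    · exact cDi x hD y hD' hxy
    · have := cD x hD; have := cB y hD'; omega
    · have := cD y hD'; have := cB x hD; omega
    · have hxB := DB i x hx hD
      have hyB := DB i y hy hD'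
      apply c2 x hxB y hyB
      · rw [← (hf x hxB i).1 hx, ← (hf y hyB i).1 hy]
      · rw [cB x hD, cB y hD'] at hxy; omega
  · intro i j k x y z hx hy hz hxy hyz
    by_cases hD : x ∈ Dset A <;> by_cases hD' : y ∈ Dset A <;> by_cases hD'' : z ∈ Dset A
    · have e1 := cDi x hD y hD' hxy
      have e2 := cDi y hD' z hD'' hyz
      subst e1; subst e2
      by_contra hcon
      push Not at hcon
      have := Finset.two_lt_card.2 ⟨i, (mem_cdeg A x i).2 hx, j, (mem_cdeg A x j).2 hy,
        k, (mem_cdeg A x k).2 hz, hcon.1, hcon.2.1, hcon.2.2⟩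
      have := h x
      omega
    · have := cD y hD'; have := cB z hD''; omega
    · have := cD x hD; have := cB y hD'; omega
    · have := cD x hD; have := cB y hD'; omega
    · have := cD y hD'; have := cB x hD; omega
    · have := cD y hD'; have := cB x hD; omega
    · have := cD z hD''; have := cB y hD'; omega
    · have hxB := DB i x hx hD
      have hyB := DB j y hy hD'
      have hzB := DB k z hz hD''
      rw [(hf x hxB i).1 hx, (hf y hyB j).1 hy, (hf z hzB k).1 hz]
      have := cB x hD; have := cB y hD'; have := cB z hD''
      rcases c3 x hxB y hyB z hzB (by omega) (by omega) with h | h | h <;> simp [h]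

section nec
variable {K : Type*} [Field K] {m n r : ℕ} (u : Fin m → Fin 2 → K) (v : Fin n → Fin r → K)

/-- abstract tensor vector -/
def wvec (e : Fin m × Fin n) : Fin 2 × Fin r → K := fun kl => u e.1 kl.1 * v e.2 kl.2

lemma nec1 (hu : ∀ a b, a ≠ b → u a 0 * u b 1 - u a 1 * u b 0 ≠ 0)
    (A : Fin m → Finset (Fin n))
    (hE : LinearIndependent K
      (fun e : ({p : Fin m × Fin n | p.2 ∈ A p.1} : Set _) => wvec u v e)) :
    ∀ i j k : Fin m, i ≠ j → i ≠ k → j ≠ k → (A i ∩ A j ∩ A k).card = 0 := by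
  intro i j k hij hik hjk
  rw [Finset.card_eq_zero, Finset.eq_empty_iff_forall_notMem]
  intro x hx
  simp only [Finset.mem_inter] at hx
  obtain ⟨⟨h1, h2⟩, h3⟩ := hx
  let F : Fin 3 → ({p : Fin m × Fin n | p.2 ∈ A p.1} : Set _) :=
    ![⟨(i, x), h1⟩, ⟨(j, x), h2⟩, ⟨(k, x), h3⟩]
  have hF : Function.Injective F := by
    intro a b hab
    fin_cases a <;> fin_cases b <;> simp_all [F]
  have h := Fintype.linearIndependent_iff.1 (hE.comp F hF)
    ![u j 0 * u k 1 - u j 1 * u k 0, -(u i 0 * u k 1 - u i 1 * u k 0),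
      u i 0 * u j 1 - u i 1 * u j 0] (by
      rw [Fin.sum_univ_three]
      ext ⟨a, l⟩
      fin_cases a <;> simp [F, wvec] <;> ring) 0
  exact hu j k hjk (by simpa using h)

lemma nec2 (hu : ∀ a b, a ≠ b → u a 0 * u b 1 - u a 1 * u b 0 ≠ 0) (hu0 : ∀ a, u a 0 ≠ 0)
    (A : Fin m → Finset (Fin n))
    (hE : LinearIndependent K
      (fun e : ({p : Fin m × Fin n | p.2 ∈ A p.1} : Set _) => wvec u v e)) (k : Fin m) :
    (Dset A).card + ((A k).filter (fun x => (cdeg A x).card = 1)).card ≤ r := by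
  have hdisj : Disjoint (Dset A) ((A k).filter (fun x => (cdeg A x).card = 1)) := by
    rw [Finset.disjoint_left]
    intro x hx hx'
    simp only [Dset, Finset.mem_filter, Finset.mem_univ, true_and] at hx hx'
    omega
  rw [← Finset.card_union_of_disjoint hdisj]
  set C := Dset A ∪ ((A k).filter (fun x => (cdeg A x).card = 1)) with hC
  have hex : ∀ x, ∃ h : Fin m → K, x ∈ C → (∀ i, x ∉ A i → h i = 0) ∧
      ∀ a, ∑ i, h i * u i a = u k a := by
    intro x
    by_cases hx : x ∈ C
    · rw [hC, Finset.mem_union] at hx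
      rcases hx with hx | hx
      · simp only [Dset, Finset.mem_filter, Finset.mem_univ, true_and] at hx
        obtain ⟨a, b, hab, hS⟩ := Finset.card_eq_two.1 hx
        have hd := hu a b hab
        refine ⟨fun i => if i = a then (u k 0 * u b 1 - u k 1 * u b 0) /
            (u a 0 * u b 1 - u a 1 * u b 0) else if i = b then
            (u a 0 * u k 1 - u a 1 * u k 0) / (u a 0 * u b 1 - u a 1 * u b 0) else 0,
            fun _ => ⟨?_, ?_⟩⟩
        · intro i hi
          rw [← mem_cdeg, hS] at hi
          simp only [Finset.mem_insert, Finset.mem_singleton, not_or] at hi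
          simp [hi.1, hi.2]
        · intro t
          rw [← Finset.sum_subset (Finset.subset_univ {a, b}), Finset.sum_pair hab]
          · simp only [if_true, if_neg hab.symm]
            fin_cases t <;> simp only [Fin.zero_eta, Fin.mk_one, Fin.isValue] <;>
              rw [div_mul_eq_mul_div, div_mul_eq_mul_div, ← add_div, div_eq_iff hd] <;> ring
          · intro i _ hi
            simp only [Finset.mem_insert, Finset.mem_singleton, not_or] at hi
            simp [hi.1, hi.2]
      · simp only [Finset.mem_filter] at hx
        refine ⟨fun i => if i = k then 1 else 0, fun _ => ⟨?_, ?_⟩⟩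
        · intro i hi
          have : i ≠ k := by rintro rfl; exact hi hx.1
          simp [this]
        · intro a; simp
    · exact ⟨0, fun h => absurd h hx⟩
  choose h hh using hex
  have hv : LinearIndependent K (fun x : C => v x) := by
    rw [Fintype.linearIndependent_iff]
    intro c hc x
    have hg := Fintype.linearIndependent_iff.1 hE
      (fun e => if hx : e.1.2 ∈ C then c ⟨e.1.2, hx⟩ * h e.1.2 e.1.1 else 0) (by
      ext ⟨a, l⟩
      have hcl := congrFun hc l
      simp only [Finset.sum_apply, Pi.smul_apply, smul_eq_mul, Pi.zero_apply, wvec] at hcl ⊢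
      have e1 : ∀ G : Fin m × Fin n → K, (∀ p, p.2 ∉ A p.1 → G p = 0) →
          ∑ e : ({p : Fin m × Fin n | p.2 ∈ A p.1} : Set _), G e = ∑ y, ∑ i, G (i, y) := by
        intro G hG
        rw [Finset.sum_comm, ← Fintype.sum_prod_type (f := G)]
        rw [← Finset.sum_subset (Finset.subset_univ
          ({p : Fin m × Fin n | p.2 ∈ A p.1} : Set _).toFinset)]
        · exact (Finset.sum_subtype _ (by intro x; simp) G).symm
        · intro p _ hp
          exact hG p (by simpa using hp)
      refine (e1 (fun p => (if hx : p.2 ∈ C then c ⟨p.2, hx⟩ * h p.2 p.1 else 0) *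
        (u p.1 a * v p.2 l)) ?_).trans ?_
      · intro p hp
        split_ifs with hx
        · rw [(hh p.2 hx).1 p.1 hp]; ring
        · ring
      · have e2 : ∀ y, ∑ i, (if hx : y ∈ C then c ⟨y, hx⟩ * h y i else 0) * (u i a * v y l)
            = u k a * (if hx : y ∈ C then c ⟨y, hx⟩ * v y l else 0) := by
          intro y
          split_ifs with hx
          · rw [← (hh y hx).2 a, Finset.sum_mul]
            exact Finset.sum_congr rfl fun i _ => by ring
          · simp
        dsimp only
        simp_rw [e2]
        rw [← Finset.mul_sum]
        rw [← Finset.sum_subset (Finset.subset_univ C), ← Finset.sum_coe_sort]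
        · simp only [Finset.coe_mem, dif_pos]
          simp only [Subtype.coe_eta]
          rw [hcl, mul_zero]
        · intro y _ hy
          simp [hy])
    by_contra hcx
    have hz : ∀ i, h x i = 0 := by
      intro i
      by_cases hi : x.1 ∈ A i
      · have := hg ⟨(i, x), hi⟩
        simpa [hcx] using this
      · exact (hh x x.2).1 i hi
    have := (hh x x.2).2 0
    simp only [hz, zero_mul, Finset.sum_const_zero] at this
    exact hu0 k this.symm
  simpa using hv.fintype_card_le_finrank

lemma nec3 (A : Fin m → Finset (Fin n))
    (hE : LinearIndependent K
      (fun e : ({p : Fin m × Fin n | p.2 ∈ A p.1} : Set _) => wvec u v e)) :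
    ∑ i, (A i).card ≤ 2 * r := by
  have h := hE.fintype_card_le_finrank
  have e : ({p : Fin m × Fin n | p.2 ∈ A p.1} : Set _) ≃ (Σ i, A i) :=
    ⟨fun p => ⟨p.1.1, p.1.2, p.2⟩, fun s => ⟨(s.1, s.2.1), s.2.2⟩, fun _ => rfl, fun _ => rfl⟩
  rw [Fintype.card_congr e] at h
  simpa using h

end nec

lemma X_det {σ F : Type*} [Field F] (a b c d : σ) (h1 : a ≠ b) (h2 : a ≠ c) (h3 : a ≠ d)
    (h4 : b ≠ d) :
    (MvPolynomial.X a * MvPolynomial.X b - MvPolynomial.X c * MvPolynomial.X d :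
      MvPolynomial σ F) ≠ 0 := by
  intro h
  have := congrArg (MvPolynomial.eval (fun x => if x = a ∨ x = b then (1 : F) else 0)) h
  simp [h3.symm, h4.symm] at this

/-- the polynomial ring -/
abbrev RR (F : Type*) [Field F] (m n r : ℕ) :=
  MvPolynomial ((Fin m × Fin 2) ⊕ (Fin n × Fin r)) F

lemma suff {F : Type*} [Field F] {m n r : ℕ} (hm : 2 ≤ m) (A : Fin m → Finset (Fin n))
    (c : Fin n → ℕ) (c1 : ∀ i, ∀ x ∈ A i, c x < r)
    (c2 : ∀ i, ∀ x ∈ A i, ∀ y ∈ A i, c x = c y → x = y)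
    (c3 : ∀ i j k x y z, x ∈ A i → y ∈ A j → z ∈ A k → c x = c y → c y = c z →
        i = j ∨ i = k ∨ j = k) :
    TensorIndep F m n 2 r {p : Fin m × Fin n | p.2 ∈ A p.1} := by
  set E : Set (Fin m × Fin n) := {p : Fin m × Fin n | p.2 ∈ A p.1} with hE
  have hp : ∀ e : E, ∃ i : Fin m, i ≠ e.1.1 ∧
      ∀ e' : E, e' ≠ e → c e'.1.2 = c e.1.2 → i = e'.1.1 := by
    rintro ⟨⟨i, x⟩, hx⟩
    by_cases h : ∃ e' : E, e' ≠ ⟨⟨i, x⟩, hx⟩ ∧ c e'.1.2 = c x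
    · obtain ⟨⟨⟨j, y⟩, hy⟩, hne, hc⟩ := h
      refine ⟨j, ?_, ?_⟩
      · rintro rfl
        have := c2 _ y hy x hx hc
        exact hne (by simp [this])
      · rintro ⟨⟨k, z⟩, hz⟩ hne' hc'
        dsimp only at hc hc' ⊢
        have hji : j ≠ i := by
          rintro rfl
          exact hne (by simp [c2 _ y hy x hx hc])
        have hki : k ≠ i := by
          rintro rfl
          exact hne' (by simp [c2 _ z hz x hx hc'])
        rcases c3 i j k x y z hx hy hz hc.symm (hc.trans hc'.symm) with h | h | h
        · exact absurd h.symm hji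
        · exact absurd h.symm hki
        · exact h
    · push Not at h
      have : Nontrivial (Fin m) := Fin.nontrivial_iff_two_le.2 hm
      obtain ⟨j, hj⟩ := exists_ne i
      exact ⟨j, hj, fun e' h1 h2 => absurd h2 (h e' h1)⟩
  choose p hp1 hp2 using hp
  let ux : Fin m → Fin 2 → (RR F m n r) := fun i k => MvPolynomial.X (Sum.inl (i, k))
  let vy : Fin n → Fin r → (RR F m n r) := fun j l => MvPolynomial.X (Sum.inr (j, l))
  let rot : Fin m → Fin 2 → (RR F m n r) := fun i => ![ux i 1, - ux i 0]
  let L : E → Fin 2 × Fin r → (RR F m n r) := fun e kl => rot (p e) kl.1 * if c e.1.2 = kl.2 then 1 else 0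
  let G : Matrix E E (RR F m n r) :=
    Matrix.of fun e' e => ∑ kl, (ux e'.1.1 kl.1 * vy e'.1.2 kl.2) * L e kl
  let φ : (RR F m n r) →ₐ[F] (RR F m n r) := MvPolynomial.aeval (Sum.elim (fun ik => MvPolynomial.X (Sum.inl ik))
    (fun jl => if c jl.1 = jl.2 then 1 else 0))
  have φu : ∀ i k, φ (ux i k) = ux i k := by intro i k; simp [φ, ux]
  have φv : ∀ j l, φ (vy j l) = if c j = l then 1 else 0 := by intro i k; simp [φ, vy]
  have φr : ∀ i k, φ (rot i k) = rot i k := by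
    intro i k
    fin_cases k <;> simp [rot, φu]
  have φL : ∀ e kl, φ (L e kl) = L e kl := by
    intro e kl
    simp only [L, map_mul, φr]
    split_ifs <;> simp
  have φG : φ.mapMatrix G = Matrix.diagonal
      (fun e : E => ux e.1.1 0 * ux (p e) 1 - ux e.1.1 1 * ux (p e) 0) := by
    ext1 e' e
    simp only [AlgHom.mapMatrix_apply, Matrix.map_apply, Matrix.of_apply, G, map_sum, map_mul, φu, φv, φL]
    rw [Fintype.sum_prod_type, Fin.sum_univ_two]
    have key : ∀ a b : (RR F m n r), ∑ l : Fin r, a * (if c e'.1.2 = l then 1 else 0) *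
        (b * if c e.1.2 = l then 1 else 0) = if c e'.1.2 = c e.1.2 then a * b else 0 := by
      intro a b
      have hl := c1 _ _ e'.2
      rw [Finset.sum_eq_single (⟨c e'.1.2, hl⟩ : Fin r)]
      · simp only [if_true, mul_one]
        by_cases hcc : c e'.1.2 = c e.1.2
        · simp [hcc]
        · simp [hcc, Ne.symm hcc]
      · intro l _ hne
        have : c e'.1.2 ≠ l := fun h => hne (Fin.ext h.symm)
        simp [this]
      · simp
    simp only [L, key]
    by_cases he : e' = e
    · subst he
      simp [rot]; ring
    · rw [Matrix.diagonal_apply_ne _ he]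
      by_cases hcc : c e'.1.2 = c e.1.2
      · have := hp2 e e' he hcc
        simp [hcc, rot, this]; ring
      · simp [hcc]
  have hdet : G.det ≠ 0 := by
    intro h0
    have h1 := congrArg φ h0
    rw [AlgHom.map_det, φG, Matrix.det_diagonal, map_zero, Finset.prod_eq_zero_iff] at h1
    obtain ⟨e, _, he⟩ := h1
    have hne := hp1 e
    refine X_det _ _ _ _ ?_ ?_ ?_ ?_ he <;> simp [hne.symm]
  have hdetK : ((algebraMap (RR F m n r) (TField F m n 2 r)).mapMatrix G).det ≠ 0 := by
    rw [← RingHom.map_det]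
    simpa using hdet
  have hli := Matrix.linearIndependent_rows_of_det_ne_zero hdetK
  let T : (Fin 2 × Fin r → (TField F m n 2 r)) →ₗ[(TField F m n 2 r)] (E → (TField F m n 2 r)) :=
    Matrix.mulVecLin (Matrix.of fun (e : E) kl => algebraMap (RR F m n r) (TField F m n 2 r) (L e kl))
  refine LinearIndependent.of_comp T ?_
  have hfun : (T ∘ fun e : E => tvec F m n 2 r e) =
      fun e => (algebraMap (RR F m n r) (TField F m n 2 r)).mapMatrix G e := by
    ext e' e
    simp only [T, Function.comp, Matrix.mulVecLin_apply, Matrix.mulVec, dotProduct,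
      Matrix.of_apply, RingHom.mapMatrix_apply, Matrix.map_apply, G, map_sum, map_mul, tvec,
      ux, vy]
    exact Finset.sum_congr rfl fun kl _ => by ring
  rw [hfun]
  exact hli

theorem case_s_eq_two (F : Type*) [Field F] (m n r : ℕ) (hm : 2 ≤ m) (hr : r ≤ n)
    (A : Fin m → Finset (Fin n)) (hA : ∀ i, (A i).card ≤ r) :
    TensorIndep F m n 2 r {p : Fin m × Fin n | p.2 ∈ A p.1} ↔
      ((∀ i j k : Fin m, i ≠ j → i ≠ k → j ≠ k → (A i ∩ A j ∩ A k).card = 0) ∧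
       (∀ k : Fin m,
          (∑ p ∈ Finset.univ.filter (fun p : Fin m × Fin m => p.1 < p.2),
              (A p.1 ∩ A p.2).card) +
            (A k \ (Finset.univ.erase k).biUnion A).card ≤ r) ∧
       ∑ i, (A i).card ≤ 2 * r) := by
  constructor
  · intro hE
    let R := MvPolynomial ((Fin m × Fin 2) ⊕ (Fin n × Fin r)) F
    let K := TField F m n 2 r
    let u : Fin m → Fin 2 → K := fun i k => algebraMap R K (MvPolynomial.X (Sum.inl (i, k)))
    let v : Fin n → Fin r → K := fun j l => algebraMap R K (MvPolynomial.X (Sum.inr (j, l)))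
    have hE' : LinearIndependent K
      (fun e : ({p : Fin m × Fin n | p.2 ∈ A p.1} : Set _) => wvec u v e) := hE
    have hinj : Function.Injective (algebraMap R K) := IsFractionRing.injective R K
    have hu : ∀ a b, a ≠ b → u a 0 * u b 1 - u a 1 * u b 0 ≠ 0 := by
      intro a b hab
      simp only [u, ← map_mul, ← map_sub]
      rw [map_ne_zero_iff _ hinj]
      refine X_det _ _ _ _ ?_ ?_ ?_ ?_ <;> simp [hab]
    have hu0 : ∀ a, u a 0 ≠ 0 := by
      intro a
      simp only [u]
      rw [map_ne_zero_iff _ hinj]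
      exact MvPolynomial.X_ne_zero _
    have h1 := nec1 u v hu A hE'
    refine ⟨h1, fun k => ?_, nec3 u v A hE'⟩
    rw [sum_pairs A (cdeg_le A h1), only_eq]
    exact nec2 u v hu hu0 A hE' k
  · rintro ⟨h1, h2, h3⟩
    have hd := cdeg_le A h1
    rw [sum_DB A hd] at h3
    simp only [sum_pairs A hd, only_eq] at h2
    obtain ⟨c, c1, c2, c3⟩ := exists_color_all A hd (by omega) h2 h3
    exact suff hm A c c1 c2 c3
end
end
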